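/- arXiv:1408.0632 — 2 statements merged into one kernel-verified Lean document; each statement's English description precedes it below -/
import Mathlib

section
/- There is C > 0 such that for every x ≥ 1: (i) |2·√π·x^{1/4}·e^{(2/3)·x^{3/2}}·Ai(x) − 1| ≤ C·x^{−3/2}; (ii) |2·√π·x^{−1/4}·e^{(2/3)·x^{3/2}}·Ai'(x) + 1| ≤ C·x^{−3/2}; (iii) |Ai(−x) − π^{−1/2}·x^{−1/4}·cos((2/3)·x^{3/2} − π/4)| ≤ C·x^{−7/4}; (iv) |Ai'(−x) − π^{−1/2}·x^{1/4}·sin((2/3)·x^{3/2} − π/4)| ≤ C·x^{−5/4}. -/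
open MeasureTheory Filter Set

noncomputable section

/-- The Airy function `Ai(x) = (1/π)·lim_{b→∞} ∫_0^b cos(t³/3 + x·t) dt`. -/
def Ai (x : ℝ) : ℝ :=
  (1 / Real.pi) *
    limUnder Filter.atTop (fun b : ℝ => ∫ t in (0:ℝ)..b, Real.cos (t ^ 3 / 3 + x * t))

/-- The Airy kernel. -/
def KAi (x y : ℝ) : ℝ :=
  if x = y then (deriv Ai x) ^ 2 - x * (Ai x) ^ 2
  else (Ai x * deriv Ai y - deriv Ai x * Ai y) / (x - y)

/-- One-point correlation function of the Airy₂ random point field. -/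
def rho (x : ℝ) : ℝ := (deriv Ai x) ^ 2 - x * (Ai x) ^ 2

/-- Probabilists' Hermite polynomial `Ĥ_m(x) = (−1)^m e^{x²/2} (d/dx)^m e^{−x²/2}`. -/
def hermiteP (m : ℕ) (x : ℝ) : ℝ :=
  (-1 : ℝ) ^ m * Real.exp (x ^ 2 / 2) * iteratedDeriv m (fun t => Real.exp (-t ^ 2 / 2)) x

/-- Normalized oscillator function `φ_m`. -/
def osc (m : ℕ) (x : ℝ) : ℝ :=
  (2 * Real.pi) ^ (-(1:ℝ)/4) * ((m.factorial : ℝ)) ^ (-(1:ℝ)/2) *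
    Real.exp (-x ^ 2 / 4) * hermiteP m x

/-- `ψ_mⁿ(x) = n^{1/12}·φ_m(2√n + n^{−1/6}·x)`. -/
def psiUp (n m : ℕ) (x : ℝ) : ℝ :=
  (n : ℝ) ^ ((1:ℝ)/12) * osc m (2 * Real.sqrt n + (n : ℝ) ^ (-(1:ℝ)/6) * x)

/-- `ψ_n = ψ_nⁿ`. -/
def psiN (n : ℕ) : ℝ → ℝ := psiUp n n

/-- The finite-`n` Airy kernel. -/
def KAiN (n : ℕ) (x y : ℝ) : ℝ :=
  if x = y then
    (deriv (psiN n) x) ^ 2 - psiN n x * deriv (deriv (psiN n)) x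
      - (1 / (2 * (n : ℝ) ^ ((1:ℝ)/3))) * (psiN n x) ^ 2
  else
    (psiN n x * deriv (psiN n) y - deriv (psiN n) x * psiN n y) / (x - y)
      - (1 / (2 * (n : ℝ) ^ ((1:ℝ)/3))) * (psiN n x * psiN n y)

/-- `(εf)(x) = (1/2)·∫_ℝ sign(x − y)·f(y) dy`. -/
def epsF (f : ℝ → ℝ) (x : ℝ) : ℝ := (1/2) * ∫ y : ℝ, Real.sign (x - y) * f y

/-- `εψ_n`. -/
def epsPsi (n : ℕ) : ℝ → ℝ := epsF (psiN n)

/-- `J₁(x,y) = K_Ai(x,y) + (1/2)·Ai(x)·(1 − ∫_y^∞ Ai(u) du)`. -/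
def J1 (x y : ℝ) : ℝ := KAi x y + (1/2) * Ai x * (1 - ∫ u in Set.Ioi y, Ai u)

/-- Scalar part of the quaternion product of Airy₁ kernels. -/
def L1 (x y : ℝ) : ℝ :=
  J1 x y * J1 y x -
    deriv (fun v => J1 x v) y * ((∫ u in x..y, J1 u x) - (1/2) * Real.sign (y - x))

/-- `J₁ⁿ(x,y) = K_Aiⁿ(x,y) + (1/2)·ψ_{n−1}ⁿ(x)·(εψ_n)(y)`. -/
def J1N (n : ℕ) (x y : ℝ) : ℝ :=
  KAiN n x y + (1/2) * psiUp n (n - 1) x * epsPsi n y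

/-- Scalar part of the quaternion product of finite-`n` Airy₁ kernels. -/
def L1N (n : ℕ) (x y : ℝ) : ℝ :=
  J1N n x y * J1N n y x -
    deriv (fun v => J1N n x v) y * ((∫ u in x..y, J1N n u x) - (1/2) * Real.sign (y - x))

/-- `ρ̂(x) = (1/π)·√(−x)` for `x < 0`, and `0` otherwise. -/
def rhoHat (x : ℝ) : ℝ := if x < 0 then Real.sqrt (-x) / Real.pi else 0

/-- `ρ̂ⁿ(x) = (1/π)·√(−x·(1 + x/(4·n^{2/3})))` on `(−4n^{2/3}, 0)`, and `0` otherwise. -/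
def rhoHatN (n : ℕ) (x : ℝ) : ℝ :=
  if -(4 * (n : ℝ) ^ ((2:ℝ)/3)) < x ∧ x < 0 then
    Real.sqrt (-x * (1 + x / (4 * (n : ℝ) ^ ((2:ℝ)/3)))) / Real.pi
  else 0

/-- `G_{a,b,c}(x,y) = |x|^{−a}·|y|^{−b}·|x−y|^{−c}`. -/
def Gf (a b c : ℝ) (x y : ℝ) : ℝ := |x| ^ (-a) * |y| ^ (-b) * |x - y| ^ (-c)

/-- `Ĝ_{a,b,c}(x,y) = G_{a,b,c}(x,y) + G_{a,b,c}(y,x)`. -/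
def Ghat (a b c : ℝ) (x y : ℝ) : ℝ := Gf a b c x y + Gf a b c y x

/-- Soft-edge one-point correlation function of the `n`-point GUE ensemble. -/
def rhoN (n : ℕ) (x : ℝ) : ℝ :=
  (deriv (psiN n) x) ^ 2 - (x ^ 2 / (4 * (n : ℝ) ^ ((2:ℝ)/3)) + x) * (psiN n x) ^ 2

end


section AiryHelpers

open Complex Topology

/-- The Airy integrand with weight `(iz)^n`. -/
noncomputable def fA (n : ℕ) (x : ℝ) (z : ℂ) : ℂ := (I * z) ^ n * cexp (I * (z ^ 3 / 3 + x * z))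

lemma fA_diff (n : ℕ) (x : ℝ) : Differentiable ℂ (fA n x) := by
  unfold fA; fun_prop

lemma fA_cont (n : ℕ) (x : ℝ) : Continuous (fA n x) := (fA_diff n x).continuous

lemma fA_prim (n : ℕ) (x : ℝ) : ∃ F : ℂ → ℂ, ∀ z, HasDerivAt F (fA n x z) z := by
  obtain ⟨F, hF⟩ := (fA_diff n x).isExactOn_univ
  exact ⟨F, fun z => hF z (mem_univ _)⟩

lemma fA_norm (n : ℕ) (x T y : ℝ) :
    ‖fA n x (T + y * I)‖ = ‖(T + y * I : ℂ)‖ ^ n * Real.exp (-T ^ 2 * y + y ^ 3 / 3 - x * y) := by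
  have h : (I * ((T + y * I : ℂ) ^ 3 / 3 + x * (T + y * I))) =
      ((-T ^ 2 * y + y ^ 3 / 3 - x * y : ℝ) : ℂ) + ((T ^ 3 / 3 - T * y ^ 2 + x * T : ℝ) : ℂ) * I := by
    push_cast
    have h2 : (I : ℂ) ^ 2 = -1 := I_sq
    have h4 : (I : ℂ) ^ 4 = 1 := I_pow_four
    ring_nf
    rw [h2, h4, I_pow_three]
    ring
  rw [fA, h, norm_mul, norm_pow, norm_mul, norm_I, one_mul, norm_exp]
  rw [add_re, ofReal_re, re_ofReal_mul, I_re, mul_zero, add_zero]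

lemma norm_TyI (T y : ℝ) : ‖(T + y * I : ℂ)‖ ≤ |T| + |y| := by
  refine (norm_add_le _ _).trans ?_
  simp

lemma fA_norm_le {n : ℕ} (hn : n ≤ 1) (x T y : ℝ) :
    ‖fA n x (T + y * I)‖ ≤ (1 + |T| + |y|) * Real.exp (-T ^ 2 * y + y ^ 3 / 3 - x * y) := by
  rw [fA_norm]
  gcongr
  have := norm_TyI T y
  interval_cases n
  · rw [pow_zero]; linarith [abs_nonneg T, abs_nonneg y]
  · rw [pow_one]; linarith

lemma vert_le {F f : ℂ → ℂ} (hF : ∀ z, HasDerivAt F (f z) z) (T y₁ y₂ K : ℝ) (h12 : y₁ ≤ y₂)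
    (hb : ∀ y ∈ Icc y₁ y₂, ‖f (T + y * I)‖ ≤ K) :
    ‖F (T + y₂ * I) - F (T + y₁ * I)‖ ≤ K * (y₂ - y₁) := by
  have hd : ∀ y : ℝ, HasDerivAt (fun y : ℝ => F (T + y * I)) (f (T + y * I) * I) y := by
    intro y
    have h1 : HasDerivAt (fun y : ℝ => (T + y * I : ℂ)) I y := by
      simpa using ((hasDerivAt_id y).ofReal_comp.mul_const I).const_add (T : ℂ)
    exact (hF _).comp y h1
  refine norm_image_sub_le_of_norm_deriv_le_segment' (f := fun y : ℝ => F (T + y * I))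
    (fun y _ => (hd y).hasDerivWithinAt) (fun y hy => ?_) y₂ ⟨h12, le_rfl⟩
  rw [norm_mul, norm_I, mul_one]
  exact hb y ⟨hy.1, hy.2.le⟩

lemma path_tendsto {F f : ℂ → ℂ} (hF : ∀ z, HasDerivAt F (f z) z) (hf : Continuous f)
    (p d : ℂ) (c : ℝ) (hi : IntegrableOn (fun t : ℝ => f (p + t * d)) (Ioi c)) :
    Tendsto (fun t : ℝ => F (p + t * d)) atTop
      (𝓝 (F (p + c * d) + d * ∫ t in Ioi c, f (p + t * d))) := by
  have hd : ∀ t : ℝ, HasDerivAt (fun t : ℝ => F (p + t * d)) (f (p + t * d) * d) t := by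
    intro y
    have h1 : HasDerivAt (fun y : ℝ => (p + y * d : ℂ)) d y := by
      simpa using ((hasDerivAt_id y).ofReal_comp.mul_const d).const_add (p : ℂ)
    exact (hF _).comp y h1
  have h2 := intervalIntegral_tendsto_integral_Ioi c hi tendsto_id
  have h3 : ∀ t : ℝ, F (p + t * d) = F (p + c * d) + d * ∫ s in c..t, f (p + s * d) := by
    intro t
    have := intervalIntegral.integral_eq_sub_of_hasDerivAt (a := c) (b := t)
      (fun s _ => hd s) (Continuous.intervalIntegrable (by fun_prop) _ _)
    rw [intervalIntegral.integral_mul_const] at this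
    rw [mul_comm d, this]; ring
  rw [show (fun t : ℝ => F (p + t * d)) =
    fun t : ℝ => F (p + c * d) + d * ∫ s in c..t, f (p + s * d) from funext h3]
  exact (h2.const_mul d).const_add _

lemma re_imag_axis {n : ℕ} {x : ℝ} {F : ℂ → ℂ} (hF : ∀ z, HasDerivAt F (fA n x z) z) (u : ℝ) :
    (F (u * I)).re = (F 0).re := by
  have hd : ∀ y : ℝ, HasDerivAt (fun y : ℝ => (F (y * I)).re) 0 y := by
    intro y
    have h1 : HasDerivAt (fun y : ℝ => (y * I : ℂ)) I y := by
      simpa using ((hasDerivAt_id y).ofReal_comp.mul_const I)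
    have h2 : HasDerivAt (fun y : ℝ => F (y * I)) (fA n x (y * I) * I) y := (hF _).comp y h1
    have h3 := Complex.reCLM.hasFDerivAt.comp_hasDerivAt y h2
    refine HasDerivAt.congr_deriv h3 ?_
    have e1 : fA n x (y * I) = (((-y) ^ n * Real.exp (y ^ 3 / 3 - x * y) : ℝ) : ℂ) := by
      have h : (I * ((y * I : ℂ) ^ 3 / 3 + x * (y * I))) = ((y ^ 3 / 3 - x * y : ℝ) : ℂ) := by
        push_cast
        have h2 : (I : ℂ) ^ 2 = -1 := I_sq
        have h4 : (I : ℂ) ^ 4 = 1 := I_pow_four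
        ring_nf
        rw [h2, h4]
        ring
      have h' : I * (y * I : ℂ) = ((-y : ℝ) : ℂ) := by
        push_cast
        linear_combination (y : ℂ) * I_mul_I
      rw [fA, h, h']; push_cast; rfl
    rw [e1]
    simp [-ofReal_mul]
  have := is_const_of_deriv_eq_zero (fun y => (hd y).differentiableAt) (fun y => (hd y).deriv) u 0
  simpa using this

lemma decay2 (A m : ℝ) (hm : 0 < m) (k : ℕ) :
    Tendsto (fun t : ℝ => A * (t ^ k * Real.exp (-m * t))) atTop (𝓝 0) := by
  have := tendsto_rpow_mul_exp_neg_mul_atTop_nhds_zero k m hm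
  simp only [Real.rpow_natCast] at this
  simpa using this.const_mul A

lemma gauss_int (k : ℕ) {a : ℝ} (ha : 0 < a) :
    Integrable (fun t : ℝ => t ^ k * Real.exp (-a * t ^ 2)) := by
  have := integrable_rpow_mul_exp_neg_mul_sq ha (s := k) (by
    have : (0 : ℝ) ≤ k := k.cast_nonneg
    linarith)
  simpa only [Real.rpow_natCast] using this

lemma fA_hor_int {n : ℕ} (hn : n ≤ 1) (x : ℝ) {c : ℝ} (hc : 0 < c) :
    Integrable (fun t : ℝ => fA n x (t + c * I)) := by
  have hg : Integrable (fun t : ℝ => Real.exp (c ^ 3 / 3 - x * c) *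
      ((1 + c) * (t ^ 0 * Real.exp (-c * t ^ 2)) + |t ^ 1 * Real.exp (-c * t ^ 2)|)) :=
    (((gauss_int 0 hc).const_mul _).add (gauss_int 1 hc).abs).const_mul _
  refine hg.mono' ?_ (Eventually.of_forall fun t => ?_)
  · exact ((fA_cont n x).comp (by fun_prop)).aestronglyMeasurable
  · refine (fA_norm_le hn x t c).trans (le_of_eq ?_)
    rw [abs_mul, abs_of_pos (Real.exp_pos _), abs_of_pos hc,
      show -t ^ 2 * c + c ^ 3 / 3 - x * c = (c ^ 3 / 3 - x * c) + -c * t ^ 2 by ring, Real.exp_add]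
    simp only [pow_zero, pow_one]
    ring

lemma shift_hor {n : ℕ} (hn : n ≤ 1) {x : ℝ} {F : ℂ → ℂ} (hF : ∀ z, HasDerivAt F (fA n x z) z)
    {y₁ y₂ : ℝ} (h1 : 0 < y₁) (h12 : y₁ ≤ y₂) :
    Tendsto (fun t : ℝ => F (t + y₂ * I) - F (t + y₁ * I)) atTop (𝓝 0) := by
  refine squeeze_zero_norm' ?_
    (decay2 (2 * Real.exp (y₂ ^ 3 / 3 + |x| * y₂) * (y₂ - y₁)) y₁ h1 1)
  filter_upwards [eventually_ge_atTop (1 + y₂)] with t ht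
  have hy2 : 0 < y₂ := h1.trans_le h12
  refine (vert_le hF t y₁ y₂ (2 * t * Real.exp (-y₁ * t + y₂ ^ 3 / 3 + |x| * y₂)) h12 ?_).trans
    (le_of_eq ?_)
  · intro y hy
    have hy0 : 0 < y := h1.trans_le hy.1
    refine (fA_norm_le hn x t y).trans ?_
    rw [abs_of_pos (by linarith : 0 < t), abs_of_pos hy0]
    refine mul_le_mul (by linarith [hy.2]) (Real.exp_le_exp.mpr ?_) (Real.exp_pos _).le (by linarith)
    · have e1 : y₁ * t ≤ t ^ 2 * y := by
        have h1t : 1 ≤ t := by linarith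
        calc y₁ * t ≤ y * t := by gcongr; exact hy.1
          _ ≤ y * t * t := le_mul_of_one_le_right (by positivity) h1t
          _ = t ^ 2 * y := by ring
      have e2 : y ^ 3 ≤ y₂ ^ 3 := pow_le_pow_left₀ hy0.le hy.2 3
      have e3 : -(x * y) ≤ |x| * y₂ := by
        calc -(x * y) ≤ |x * y| := neg_le_abs _
          _ = |x| * y := by rw [abs_mul, abs_of_pos hy0]
          _ ≤ |x| * y₂ := by gcongr; exact hy.2
      linarith
  · rw [add_assoc, Real.exp_add]; ring

lemma shift_hor' {n : ℕ} (hn : n ≤ 1) {x : ℝ} {F : ℂ → ℂ} (hF : ∀ z, HasDerivAt F (fA n x z) z)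
    {c : ℝ} (hc : 0 < c) :
    Tendsto (fun t : ℝ => F (t + c * I) - F (t + (1 : ℝ) * I)) atTop (𝓝 0) := by
  rcases le_total 1 c with h | h
  · exact shift_hor hn hF one_pos h
  · have := (shift_hor hn hF hc h).neg
    simpa using this

/-- Base representation integral on the line `Im z = 1`. -/
noncomputable def JA (n : ℕ) (x : ℝ) : ℝ := (∫ t in Ioi (0 : ℝ), fA n x (t + (1 : ℝ) * I)).re

lemma hor_tendsto {n : ℕ} (hn : n ≤ 1) {x : ℝ} {F : ℂ → ℂ} (hF : ∀ z, HasDerivAt F (fA n x z) z)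
    {c : ℝ} (hc : 0 < c) :
    Tendsto (fun t : ℝ => F (t + c * I)) atTop
      (𝓝 (F (c * I) + ∫ t in Ioi (0 : ℝ), fA n x (t + c * I))) := by
  have := path_tendsto hF (fA_cont n x) (c * I) 1 0 (by
    have := (fA_hor_int hn x hc).integrableOn (s := Ioi 0)
    simpa [add_comm] using this)
  simpa [add_comm] using this

lemma JA_hor {n : ℕ} (hn : n ≤ 1) (x : ℝ) {c : ℝ} (hc : 0 < c) :
    JA n x = (∫ t in Ioi (0 : ℝ), fA n x (t + c * I)).re := by
  obtain ⟨F, hF⟩ := fA_prim n x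
  have h1 := hor_tendsto hn hF one_pos
  have h2 := hor_tendsto hn hF hc
  have h3 := (shift_hor' hn hF hc).add h1
  simp only [sub_add_cancel, zero_add] at h3
  have h4 := congrArg Complex.re (tendsto_nhds_unique h2 h3)
  rw [add_re, add_re, re_imag_axis hF, re_imag_axis hF] at h4
  rw [JA]; linarith

lemma Ai_eq (x : ℝ) : Ai x = (1 / Real.pi) * JA 0 x := by
  obtain ⟨F, hF⟩ := fA_prim 0 x
  have h1 := hor_tendsto zero_le_one hF one_pos
  set K := Real.exp (1 / 3 + |x|) with hK
  have hb : ∀ t y : ℝ, 0 ≤ y → y ≤ 1 → ‖fA 0 x (t + y * I)‖ ≤ K * Real.exp (-t ^ 2 * y) := by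
    intro t y hy0 hy1
    rw [fA_norm, pow_zero, one_mul, hK, ← Real.exp_add]
    apply Real.exp_le_exp.mpr
    have e2 : y ^ 3 ≤ 1 := pow_le_one₀ hy0 hy1
    have e3 : -(x * y) ≤ |x| := by
      calc -(x * y) ≤ |x * y| := neg_le_abs _
        _ = |x| * y := by rw [abs_mul, abs_of_nonneg hy0]
        _ ≤ |x| := mul_le_of_le_one_right (abs_nonneg _) hy1
    linarith
  have h2 : Tendsto (fun t : ℝ => F (t + (t⁻¹ : ℝ) * I) - F (t + (0 : ℝ) * I)) atTop (𝓝 0) := by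
    refine squeeze_zero_norm' ?_ (show Tendsto (fun t : ℝ => K * t⁻¹) atTop (𝓝 0) by
      simpa using tendsto_inv_atTop_zero.const_mul K)
    filter_upwards [eventually_ge_atTop 1] with t ht
    have ht' : t⁻¹ ≤ 1 := inv_le_one_of_one_le₀ ht
    have := vert_le hF t 0 t⁻¹ K (by positivity) (fun y hy => by
      refine (hb t y hy.1 (hy.2.trans ht')).trans ?_
      refine mul_le_of_le_one_right (Real.exp_pos _).le (Real.exp_le_one_iff.mpr ?_)
      nlinarith [mul_nonneg (sq_nonneg t) hy.1])
    simpa using this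
  have h3 : Tendsto (fun t : ℝ => F (t + (1 : ℝ) * I) - F (t + (t⁻¹ : ℝ) * I)) atTop (𝓝 0) := by
    refine squeeze_zero_norm' ?_ (decay2 K 1 one_pos 0)
    filter_upwards [eventually_ge_atTop 1] with t ht
    have ht0 : 0 < t := by linarith
    have ht' : t⁻¹ ≤ 1 := inv_le_one_of_one_le₀ ht
    refine (vert_le hF t t⁻¹ 1 (K * Real.exp (-t)) ht' (fun y hy => ?_)).trans ?_
    · have hy0 : 0 ≤ y := le_trans (by positivity) hy.1
      refine (hb t y hy0 hy.2).trans ?_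
      gcongr
      have : t ^ 2 * t⁻¹ ≤ t ^ 2 * y := by gcongr; exact hy.1
      have e : t ^ 2 * t⁻¹ = t := by field_simp
      linarith
    · have : 0 ≤ K * Real.exp (-t) := by positivity
      have h5 : 1 - t⁻¹ ≤ 1 := by
        have : 0 < t⁻¹ := by positivity
        linarith
      simpa using mul_le_of_le_one_right this h5
  have h4 := h1.sub (h2.add h3)
  simp only [sub_add_sub_cancel', sub_sub_cancel, add_zero, sub_zero, ofReal_zero, zero_mul] at h4
  have h5 : ∀ b : ℝ, ∫ t in (0:ℝ)..b, Real.cos (t ^ 3 / 3 + x * t) = (F b - F 0).re := by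
    intro b
    have hd : ∀ t : ℝ, HasDerivAt (fun t : ℝ => (F t).re) (Real.cos (t ^ 3 / 3 + x * t)) t := by
      intro y
      have h2 : HasDerivAt (fun y : ℝ => F y) (fA 0 x y) y := (hF _).comp_ofReal
      have h3 := Complex.reCLM.hasFDerivAt.comp_hasDerivAt y h2
      refine HasDerivAt.congr_deriv h3 ?_
      rw [fA, pow_zero, one_mul, mul_comm I,
        show (y : ℂ) ^ 3 / 3 + x * y = ((y ^ 3 / 3 + x * y : ℝ) : ℂ) by push_cast; ring]
      simp only [reCLM_apply]
      rw [exp_ofReal_mul_I_re]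
    rw [intervalIntegral.integral_eq_sub_of_hasDerivAt (fun s _ => hd s)
      (Continuous.intervalIntegrable (by fun_prop) _ _)]
    simp
  have h6 : Tendsto (fun b : ℝ => ∫ t in (0:ℝ)..b, Real.cos (t ^ 3 / 3 + x * t)) atTop
      (𝓝 (JA 0 x)) := by
    simp_rw [h5]
    have h7 := (Complex.continuous_re.tendsto _).comp (h4.sub_const (F 0))
    suffices h8 : JA 0 x = (F ((1 : ℝ) * I) +
        (∫ t in Ioi (0 : ℝ), fA 0 x (t + (1 : ℝ) * I)) - F 0).re by
      rw [h8]; exact h7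
    rw [sub_re, add_re, re_imag_axis hF, JA]
    ring
  rw [Ai, h6.limUnder_eq]

lemma JA_deriv (x : ℝ) : HasDerivAt (JA 0) (JA 1 x) x := by
  have hg : Integrable (fun t : ℝ => Real.exp (1 / 3 + |x| + 1) *
      (2 * (t ^ 0 * Real.exp (-1 * t ^ 2)) + |t ^ 1 * Real.exp (-1 * t ^ 2)|)) :=
    (((gauss_int 0 one_pos).const_mul _).add (gauss_int 1 one_pos).abs).const_mul _
  have h := hasDerivAt_integral_of_dominated_loc_of_deriv_le (μ := volume.restrict (Ioi (0:ℝ)))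
    (F := fun (x : ℝ) (t : ℝ) => fA 0 x (t + (1 : ℝ) * I))
    (F' := fun (x : ℝ) (t : ℝ) => fA 1 x (t + (1 : ℝ) * I)) (x₀ := x)
    (Metric.ball_mem_nhds x one_pos)
    (Eventually.of_forall fun y => ((fA_cont 0 y).comp (by fun_prop)).aestronglyMeasurable)
    (fA_hor_int zero_le_one x one_pos).integrableOn
    ((fA_cont 1 x).comp (by fun_prop)).aestronglyMeasurable
    (bound := fun t : ℝ => Real.exp (1 / 3 + |x| + 1) *
      (2 * (t ^ 0 * Real.exp (-1 * t ^ 2)) + |t ^ 1 * Real.exp (-1 * t ^ 2)|))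
    (Eventually.of_forall fun t y hy => by
      refine (fA_norm_le le_rfl y t 1).trans ?_
      rw [abs_mul, abs_of_pos (Real.exp_pos _), abs_one, pow_zero, pow_one, one_mul,
        show 2 * Real.exp (-1 * t ^ 2) + |t| * Real.exp (-1 * t ^ 2) =
          (1 + |t| + 1) * Real.exp (-1 * t ^ 2) by ring, mul_left_comm, ← Real.exp_add]
      gcongr
      rw [Metric.mem_ball, Real.dist_eq] at hy
      have := neg_abs_le x
      have := neg_abs_le (y - x)
      linarith)
    hg.integrableOn
    (Eventually.of_forall fun t y hy => by
      have h1 : HasDerivAt (fun y : ℝ => I * ((t + (1:ℝ) * I : ℂ) ^ 3 / 3 + y * (t + (1:ℝ) * I)))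
          (I * (t + (1:ℝ) * I)) y := by
        simpa using (((hasDerivAt_id y).ofReal_comp.mul_const (t + (1:ℝ) * I : ℂ)).const_add
          ((t + (1:ℝ) * I : ℂ) ^ 3 / 3)).const_mul I
      have h2 := h1.cexp
      simp only [fA, pow_zero, one_mul, pow_one]
      exact h2.congr_deriv (mul_comm _ _))
  exact Complex.reCLM.hasFDerivAt.comp_hasDerivAt x h.2

lemma deriv_Ai_eq (x : ℝ) : deriv Ai x = (1 / Real.pi) * JA 1 x := by
  have : Ai = fun x => (1 / Real.pi) * JA 0 x := funext Ai_eq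
  rw [this]
  exact ((JA_deriv x).const_mul _).deriv

lemma moment (k : ℕ) : ∃ C : ℝ, 0 < C ∧ ∀ b : ℝ, 0 < b →
    ∫ t in Ioi (0 : ℝ), t ^ k * Real.exp (-(b ^ 2) * t ^ 2) = C * (b ^ (k + 1))⁻¹ := by
  have hk : (0 : ℝ) ≤ k := k.cast_nonneg
  refine ⟨1 / 2 * Real.Gamma (((k : ℝ) + 1) / 2), ?_, fun b hb => ?_⟩
  · have := Real.Gamma_pos_of_pos (s := ((k : ℝ) + 1) / 2) (by positivity)
    positivity
  · have h := integral_rpow_mul_exp_neg_mul_rpow (p := 2) (q := k) (b := b ^ 2) two_pos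
      (by linarith) (by positivity)
    simp only [Real.rpow_natCast, Real.rpow_two] at h
    rw [h, ← Real.rpow_natCast b 2, ← Real.rpow_mul hb.le, ← Real.rpow_natCast b (k + 1),
      ← Real.rpow_neg hb.le]
    have : ((2 : ℕ) : ℝ) * (-((k : ℝ) + 1) / 2) = -((k + 1 : ℕ) : ℝ) := by push_cast; ring
    rw [this]; ring

lemma moment_full (k : ℕ) (hk : Even k) (b : ℝ) :
    ∫ t : ℝ, t ^ k * Real.exp (-(b ^ 2) * t ^ 2) =
      2 * ∫ t in Ioi (0 : ℝ), t ^ k * Real.exp (-(b ^ 2) * t ^ 2) := by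
  rw [← integral_comp_abs (f := fun t : ℝ => t ^ k * Real.exp (-(b ^ 2) * t ^ 2))]
  simp only [hk.pow_abs, sq_abs]

lemma fA_hor_formula (n : ℕ) (a t : ℝ) :
    fA n (a ^ 2) (t + a * I) = (I * (t + a * I)) ^ n *
      ((Real.exp (-(2 / 3) * a ^ 3) * Real.exp (-a * t ^ 2) : ℝ) * cexp ((t ^ 3 / 3 : ℝ) * I)) := by
  rw [fA, ← Real.exp_add, ofReal_exp, ← Complex.exp_add]
  congr 2
  push_cast
  have h2 : (I : ℂ) ^ 2 = -1 := I_sq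
  have h4 : (I : ℂ) ^ 4 = 1 := I_pow_four
  ring_nf
  rw [h2, h4, I_pow_three]
  ring

lemma re_set_integral {f : ℝ → ℂ} {s : Set ℝ} (hf : IntegrableOn f s) :
    (∫ t in s, f t).re = ∫ t in s, (f t).re := by
  have := integral_re (𝕜 := ℂ) hf
  exact this.symm

lemma est1 : ∃ C : ℝ, 0 < C ∧ ∀ b : ℝ, 1 ≤ b →
    |JA 0 (b ^ 4) - Real.exp (-(2 / 3) * b ^ 6) * (√Real.pi / (2 * b))|
      ≤ C * Real.exp (-(2 / 3) * b ^ 6) * (b ^ 7)⁻¹ := by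
  obtain ⟨C, hC, hm⟩ := moment 6
  refine ⟨C, hC, fun b hb => ?_⟩
  have hb0 : 0 < b := by linarith
  have hb2 : 0 < b ^ 2 := by positivity
  have hi := (fA_hor_int zero_le_one ((b ^ 2) ^ 2) hb2).integrableOn (s := Ioi 0)
  rw [show b ^ 4 = (b ^ 2) ^ 2 by ring, JA_hor zero_le_one _ hb2, re_set_integral hi]
  have h1 : ∀ t : ℝ, (fA 0 ((b ^ 2) ^ 2) (t + (b ^ 2 : ℝ) * I)).re =
      Real.exp (-(2 / 3) * b ^ 6) * (Real.exp (-(b ^ 2) * t ^ 2) * Real.cos (t ^ 3 / 3)) := by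
    intro t
    rw [fA_hor_formula, pow_zero, one_mul, re_ofReal_mul, exp_ofReal_mul_I_re]
    ring_nf
  simp_rw [h1]
  have hg : IntegrableOn (fun t : ℝ => Real.exp (-(b ^ 2) * t ^ 2)) (Ioi 0) := by
    simpa using (gauss_int 0 hb2).integrableOn (s := Ioi 0)
  have hg2 : IntegrableOn (fun t : ℝ => Real.exp (-(b ^ 2) * t ^ 2) * Real.cos (t ^ 3 / 3)) (Ioi 0) := by
    refine Integrable.mono' hg (by fun_prop) (Eventually.of_forall fun t => ?_)
    rw [norm_mul, Real.norm_eq_abs, Real.norm_eq_abs, abs_of_pos (Real.exp_pos _)]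
    exact mul_le_of_le_one_right (Real.exp_pos _).le (Real.abs_cos_le_one _)
  have hmain : √Real.pi / (2 * b) = ∫ t in Ioi (0:ℝ), Real.exp (-(b ^ 2) * t ^ 2) := by
    rw [integral_gaussian_Ioi, Real.sqrt_div' _ hb2.le, Real.sqrt_sq hb0.le]
    field_simp
  rw [integral_const_mul, ← mul_sub, abs_mul, abs_of_pos (Real.exp_pos _), hmain,
    ← integral_sub hg2 hg, mul_assoc, mul_left_comm]
  gcongr
  rw [← hm b hb0, ← Real.norm_eq_abs]
  refine norm_integral_le_of_norm_le (gauss_int 6 hb2).integrableOn (Eventually.of_forall fun t => ?_)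
  rw [show Real.exp (-(b ^ 2) * t ^ 2) * Real.cos (t ^ 3 / 3) - Real.exp (-(b ^ 2) * t ^ 2) =
    (Real.cos (t ^ 3 / 3) - 1) * Real.exp (-(b ^ 2) * t ^ 2) by ring, norm_mul, Real.norm_eq_abs,
    Real.norm_eq_abs, abs_of_pos (Real.exp_pos _)]
  gcongr
  have h3 := Real.one_sub_sq_div_two_le_cos (x := t ^ 3 / 3)
  have h4 := Real.cos_le_one (t ^ 3 / 3)
  rw [abs_of_nonpos (by linarith)]
  nlinarith [sq_nonneg (t ^ 3)]

lemma est2 : ∃ C : ℝ, 0 < C ∧ ∀ b : ℝ, 1 ≤ b →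
    |JA 1 (b ^ 4) + Real.exp (-(2 / 3) * b ^ 6) * (b * √Real.pi / 2)|
      ≤ C * Real.exp (-(2 / 3) * b ^ 6) * (b ^ 5)⁻¹ := by
  obtain ⟨C, hC, hm⟩ := moment 6
  obtain ⟨C', hC', hm'⟩ := moment 4
  refine ⟨C + C', by positivity, fun b hb => ?_⟩
  have hb0 : 0 < b := by linarith
  have hb2 : 0 < b ^ 2 := by positivity
  have hi := (fA_hor_int le_rfl ((b ^ 2) ^ 2) hb2).integrableOn (s := Ioi 0)
  rw [show b ^ 4 = (b ^ 2) ^ 2 by ring, JA_hor le_rfl _ hb2, re_set_integral hi]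
  have h1 : ∀ t : ℝ, (fA 1 ((b ^ 2) ^ 2) (t + (b ^ 2 : ℝ) * I)).re =
      Real.exp (-(2 / 3) * b ^ 6) * (Real.exp (-(b ^ 2) * t ^ 2) *
        (-(b ^ 2) * Real.cos (t ^ 3 / 3) - t * Real.sin (t ^ 3 / 3))) := by
    intro t
    rw [fA_hor_formula, pow_one, mul_left_comm, re_ofReal_mul, exp_mul_I, ← ofReal_cos, ← ofReal_sin,
      show I * (t + (b ^ 2 : ℝ) * I) * (((Real.cos (t ^ 3 / 3) : ℝ) : ℂ) + (Real.sin (t ^ 3 / 3) : ℝ) * I)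
        = ((-(b ^ 2) * Real.cos (t ^ 3 / 3) - t * Real.sin (t ^ 3 / 3) : ℝ) : ℂ) +
          ((t * Real.cos (t ^ 3 / 3) - b ^ 2 * Real.sin (t ^ 3 / 3) : ℝ) : ℂ) * I by
        push_cast
        linear_combination ((b : ℂ) ^ 2 * (cos (t ^ 3 / 3) + sin (t ^ 3 / 3) * I) +
          t * sin (t ^ 3 / 3)) * I_mul_I,
      add_re, ofReal_re, re_ofReal_mul, I_re, mul_zero, add_zero]
    ring_nf
  have hg : IntegrableOn (fun t : ℝ => Real.exp (-(b ^ 2) * t ^ 2)) (Ioi 0) := by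
    simpa using (gauss_int 0 hb2).integrableOn (s := Ioi 0)
  have hg2 : IntegrableOn (fun t : ℝ => Real.exp (-(b ^ 2) * t ^ 2) *
        (-(b ^ 2) * Real.cos (t ^ 3 / 3) - t * Real.sin (t ^ 3 / 3))) (Ioi 0) := by
    have h3 := (hi.re).const_mul (Real.exp (-(2 / 3) * b ^ 6))⁻¹
    refine h3.congr (Eventually.of_forall fun t => ?_)
    have := h1 t
    simp only [RCLike.re_to_complex]
    rw [this, ← mul_assoc, inv_mul_cancel₀ (Real.exp_pos _).ne', one_mul]
  simp_rw [h1]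
  have hmain : b * √Real.pi / 2 = ∫ t in Ioi (0:ℝ), b ^ 2 * Real.exp (-(b ^ 2) * t ^ 2) := by
    rw [integral_const_mul, integral_gaussian_Ioi, Real.sqrt_div' _ hb2.le, Real.sqrt_sq hb0.le]
    field_simp
  rw [integral_const_mul, ← mul_add, abs_mul, abs_of_pos (Real.exp_pos _), hmain,
    ← integral_add hg2 (hg.const_mul _), mul_assoc, mul_left_comm]
  gcongr
  have hR : (C + C') * (b ^ 5)⁻¹ = ∫ t in Ioi (0:ℝ),
      (b ^ 2 * (t ^ 6 * Real.exp (-(b ^ 2) * t ^ 2)) + t ^ 4 * Real.exp (-(b ^ 2) * t ^ 2)) := by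
    rw [integral_add ((gauss_int 6 hb2).const_mul _).integrableOn (gauss_int 4 hb2).integrableOn,
      integral_const_mul, hm b hb0, hm' b hb0]
    field_simp
    ring
  rw [hR, ← Real.norm_eq_abs]
  refine norm_integral_le_of_norm_le
    (((gauss_int 6 hb2).const_mul _).add (gauss_int 4 hb2)).integrableOn
    (Eventually.of_forall fun t => ?_)
  rw [show Real.exp (-(b ^ 2) * t ^ 2) * (-(b ^ 2) * Real.cos (t ^ 3 / 3) - t * Real.sin (t ^ 3 / 3)) +
    b ^ 2 * Real.exp (-(b ^ 2) * t ^ 2) =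
    (b ^ 2 * (1 - Real.cos (t ^ 3 / 3)) - t * Real.sin (t ^ 3 / 3)) * Real.exp (-(b ^ 2) * t ^ 2) by ring,
    show b ^ 2 * (t ^ 6 * Real.exp (-(b ^ 2) * t ^ 2)) + t ^ 4 * Real.exp (-(b ^ 2) * t ^ 2) =
      (b ^ 2 * t ^ 6 + t ^ 4) * Real.exp (-(b ^ 2) * t ^ 2) by ring, norm_mul, Real.norm_eq_abs,
    Real.norm_eq_abs, abs_of_pos (Real.exp_pos _)]
  gcongr
  have h3 := Real.one_sub_sq_div_two_le_cos (x := t ^ 3 / 3)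
  have h4 := Real.cos_le_one (t ^ 3 / 3)
  refine (abs_sub _ _).trans (add_le_add ?_ ?_)
  · rw [abs_mul, abs_of_pos hb2, abs_of_nonneg (by linarith)]
    gcongr
    nlinarith [sq_nonneg (t ^ 3)]
  · rw [abs_mul]
    have h5 : |Real.sin (t ^ 3 / 3)| ≤ |t ^ 3| := by
      refine Real.abs_sin_le_abs.trans ?_
      rw [abs_div, abs_of_pos (by norm_num : (0:ℝ) < 3)]
      have := abs_nonneg (t ^ 3)
      linarith
    calc |t| * |Real.sin (t ^ 3 / 3)| ≤ |t| * |t ^ 3| := by gcongr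
      _ = |t ^ 4| := by rw [← abs_mul]; ring_nf
      _ = t ^ 4 := abs_of_nonneg (by positivity)

/-! Oscillatory side. -/

noncomputable def wA (t : ℝ) : ℂ := (-(2 / 3) * t ^ 3 : ℝ) * (1 + I)

lemma norm_one_add_I : ‖(1 + I : ℂ)‖ ≤ 3 / 2 := by
  have h : ‖(1 + I : ℂ)‖ ^ 2 = 2 := by
    rw [Complex.sq_norm, normSq_apply]; norm_num
  nlinarith [norm_nonneg (1 + I : ℂ)]

lemma wA_norm (t : ℝ) : ‖wA t‖ ≤ |t| ^ 3 := by
  rw [wA, norm_mul, norm_real, Real.norm_eq_abs, abs_mul, abs_pow, abs_neg,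
    abs_of_pos (by norm_num : (0:ℝ) < 2 / 3)]
  have := mul_le_mul_of_nonneg_left norm_one_add_I (by positivity : 0 ≤ 2 / 3 * |t| ^ 3)
  linarith

lemma wA_re (t : ℝ) : (wA t).re = -(2 / 3) * t ^ 3 := by
  rw [wA, re_ofReal_mul]; simp

lemma wA_re_le {a t : ℝ} (ha : 0 < a) (ht : -a < t) : (wA t).re ≤ a * t ^ 2 := by
  rw [wA_re]
  nlinarith [sq_nonneg t, mul_nonneg (sq_nonneg t) (by linarith : 0 ≤ t + a),
    mul_nonneg ha.le (sq_nonneg t)]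

lemma fA_obl_formula (n : ℕ) (a t : ℝ) :
    fA n (-(a ^ 2)) (a + t * (1 + I)) = (I * (a + t * (1 + I))) ^ n *
      (cexp ((-(2 / 3) * a ^ 3 : ℝ) * I) * (Real.exp (-(2 * a) * t ^ 2) * cexp (wA t))) := by
  rw [fA, ofReal_exp, ← Complex.exp_add, ← Complex.exp_add, wA]
  congr 2
  push_cast
  have h2 : (I : ℂ) ^ 2 = -1 := I_sq
  have h4 : (I : ℂ) ^ 4 = 1 := I_pow_four
  ring_nf
  rw [h2, h4, I_pow_three]
  ring

lemma obl_base_int (k : ℕ) {a : ℝ} (ha : 0 < a) :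
    IntegrableOn (fun t : ℝ => (t : ℂ) ^ k * (Real.exp (-(2 * a) * t ^ 2) * cexp (wA t))) (Ioi (-a)) := by
  refine Integrable.mono' (gauss_int k ha).norm.integrableOn ?_ ?_
  · refine Continuous.aestronglyMeasurable ?_
    unfold wA; fun_prop
  · filter_upwards [ae_restrict_mem measurableSet_Ioi] with t ht
    rw [norm_mul, norm_mul, norm_pow, norm_real, norm_real, norm_exp, norm_mul, norm_pow,
      Real.norm_of_nonneg (Real.exp_pos _).le, Real.norm_of_nonneg (Real.exp_pos _).le,
      ← Real.exp_add]
    gcongr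
    have := wA_re_le ha ht
    linarith

lemma fA_obl_int {n : ℕ} (hn : n ≤ 1) {a : ℝ} (ha : 0 < a) :
    IntegrableOn (fun t : ℝ => fA n (-(a ^ 2)) (a + t * (1 + I))) (Ioi (-a)) := by
  simp_rw [fA_obl_formula]
  have h0 := obl_base_int 0 ha
  have h1 := obl_base_int 1 ha
  interval_cases n
  · refine (h0.const_mul (cexp ((-(2 / 3) * a ^ 3 : ℝ) * I))).congr (Eventually.of_forall fun t => ?_)
    simp only [pow_zero, one_mul]
  · have := ((h0.const_mul (a : ℂ)).add (h1.const_mul (1 + I))).const_mul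
      (I * cexp ((-(2 / 3) * a ^ 3 : ℝ) * I))
    refine this.congr (Eventually.of_forall fun t => ?_)
    simp only [Pi.add_apply, pow_zero, pow_one]
    ring

lemma JA_obl {n : ℕ} (hn : n ≤ 1) {a : ℝ} (ha : 0 < a) :
    JA n (-(a ^ 2)) =
      ((1 + I) * ∫ t in Ioi (-a), fA n (-(a ^ 2)) (a + t * (1 + I))).re := by
  obtain ⟨F, hF⟩ := fA_prim n (-(a ^ 2))
  have h1 := (hor_tendsto hn hF one_pos).comp (tendsto_atTop_add_const_left _ a tendsto_id)
  have h2 := path_tendsto hF (fA_cont n _) a (1 + I) (-a) (fA_obl_int hn ha)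
  have h3 : Tendsto (fun t : ℝ => F (a + t * (1 + I)) - F ((a + t : ℝ) + (1 : ℝ) * I)) atTop (𝓝 0) := by
    have hd := (decay2 3 1 one_pos 2).comp (tendsto_atTop_add_const_left _ a tendsto_id)
    refine squeeze_zero_norm' ?_ hd
    filter_upwards [eventually_ge_atTop (1 + a), eventually_ge_atTop (3 + 3 * a ^ 2)] with t ht ht2
    have ht1 : 1 ≤ t := by linarith
    have e : (a + t * (1 + I) : ℂ) = (a + t : ℝ) + t * I := by push_cast; ring
    rw [e]
    refine (vert_le hF (a + t) 1 t (3 * (a + t) * Real.exp (-(a + t))) ht1 ?_).trans ?_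
    · intro y hy
      have hy0 : 0 < y := by linarith [hy.1]
      refine (fA_norm_le hn _ _ y).trans ?_
      rw [abs_of_pos (by linarith : 0 < a + t), abs_of_pos hy0]
      refine mul_le_mul (by linarith [hy.2]) (Real.exp_le_exp.mpr ?_) (Real.exp_pos _).le (by linarith)
      have hyT : y ≤ a + t := by linarith [hy.2]
      have e1 : y ^ 3 ≤ (a + t) ^ 2 * y := by
        have : y ^ 2 ≤ (a + t) ^ 2 := pow_le_pow_left₀ hy0.le hyT 2
        nlinarith
      have e2 : a + t ≤ 2 / 3 * (a + t) ^ 2 - a ^ 2 := by nlinarith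
      have e3 : a + t ≤ (2 / 3 * (a + t) ^ 2 - a ^ 2) * y := by
        nlinarith [hy.1]
      linarith
    · simp only [Function.comp, id]
      have : 0 ≤ 3 * (a + t) * Real.exp (-(a + t)) := by positivity
      calc _ ≤ 3 * (a + t) * Real.exp (-(a + t)) * (a + t) :=
            mul_le_mul_of_nonneg_left (by linarith) this
        _ = _ := by ring_nf
  have h4 := h3.add h1
  simp only [Function.comp_def, id, sub_add_cancel, zero_add] at h4
  have h5 := congrArg Complex.re (tendsto_nhds_unique h2 h4)
  rw [add_re, add_re, re_imag_axis hF,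
    show (a + (-a : ℝ) * (1 + I) : ℂ) = (-a : ℝ) * I by push_cast; ring, re_imag_axis hF] at h5
  rw [JA]; linarith

lemma exp_bd1 {w : ℂ} {s : ℝ} (hs : 0 ≤ s) (hw : w.re ≤ s) :
    ‖cexp w - 1‖ ≤ 2 * ‖w‖ * Real.exp s := by
  have he : 1 ≤ Real.exp s := Real.one_le_exp hs
  have hn := norm_nonneg w
  rcases le_total ‖w‖ 1 with h | h
  · exact (norm_exp_sub_one_le h).trans (le_mul_of_one_le_right (by positivity) he)
  · have h1 : ‖cexp w‖ ≤ Real.exp s := by rw [norm_exp]; exact Real.exp_le_exp.mpr hw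
    have h2 := norm_sub_le (cexp w) 1
    rw [norm_one] at h2
    nlinarith

lemma exp_bd2 {w : ℂ} {s : ℝ} (hs : 0 ≤ s) (hw : w.re ≤ s) :
    ‖cexp w - 1 - w‖ ≤ 3 * ‖w‖ ^ 2 * Real.exp s := by
  have he : 1 ≤ Real.exp s := Real.one_le_exp hs
  have hn := norm_nonneg w
  rcases le_total ‖w‖ 1 with h | h
  · refine (norm_exp_sub_one_sub_id_le h).trans ?_
    have : ‖w‖ ^ 2 ≤ 3 * ‖w‖ ^ 2 := by nlinarith [sq_nonneg ‖w‖]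
    exact this.trans (le_mul_of_one_le_right (by positivity) he)
  · have h1 : ‖cexp w‖ ≤ Real.exp s := by rw [norm_exp]; exact Real.exp_le_exp.mpr hw
    have h2 := norm_sub_le (cexp w) 1
    have h3 := norm_sub_le (cexp w - 1) w
    rw [norm_one] at h2
    have h4 : ‖w‖ ≤ ‖w‖ ^ 2 := by nlinarith
    have h5 : Real.exp s ≤ ‖w‖ ^ 2 * Real.exp s :=
      le_mul_of_one_le_left (Real.exp_pos _).le (by linarith)
    have h6 : ‖w‖ ^ 2 ≤ ‖w‖ ^ 2 * Real.exp s := le_mul_of_one_le_right (by positivity) he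
    linarith

lemma integral_odd_zero {f : ℝ → ℂ} (hf : ∀ t, f (-t) = -f t) : ∫ t, f t = 0 := by
  have h1 := integral_neg_eq_self f volume
  simp_rw [hf, integral_neg] at h1
  have h2 : (2 : ℂ) * ∫ t, f t = 0 := by linear_combination -h1
  simpa using h2

noncomputable def gO (a t : ℝ) : ℂ := Real.exp (-(2 * a) * t ^ 2) * cexp (wA t)

lemma gauss_int_C (k : ℕ) {a : ℝ} (ha : 0 < a) :
    Integrable (fun t : ℝ => (t : ℂ) ^ k * (Real.exp (-(2 * a) * t ^ 2) : ℝ)) := by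
  have := (gauss_int k (by positivity : 0 < 2 * a)).ofReal (𝕜 := ℂ)
  refine this.congr (Eventually.of_forall fun t => ?_)
  simp

lemma est_I0 : ∃ C : ℝ, 0 < C ∧ ∀ b : ℝ, 1 ≤ b →
    ‖(∫ t in Ioi (-(b ^ 2)), gO (b ^ 2) t) - (√Real.pi / (√2 * b) : ℝ)‖ ≤ C * (b ^ 7)⁻¹ := by
  obtain ⟨C, hC, hm⟩ := moment 6
  refine ⟨3 * (2 * C), by positivity, fun b hb => ?_⟩
  have hb0 : 0 < b := by linarith
  have hb2 : 0 < b ^ 2 := by positivity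
  have hb1 : 1 ≤ b ^ 2 := one_le_pow₀ hb
  have hi : IntegrableOn (gO (b ^ 2)) (Ioi (-(b ^ 2))) := by
    refine (obl_base_int 0 hb2).congr (Eventually.of_forall fun t => ?_)
    simp only [pow_zero, one_mul, gO]
  have hw : Integrable (fun t : ℝ => (Real.exp (-(2 * b ^ 2) * t ^ 2) : ℝ) * wA t) := by
    refine ((gauss_int_C 3 hb2).const_mul (-(2 / 3) * (1 + I))).congr
      (Eventually.of_forall fun t => ?_)
    simp only [wA]; push_cast; ring
  have h1 : Integrable (fun t : ℝ => ((Real.exp (-(2 * b ^ 2) * t ^ 2) : ℝ) : ℂ)) := by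
    simpa only [pow_zero, one_mul] using gauss_int_C 0 hb2
  have hmain : ((√Real.pi / (√2 * b) : ℝ) : ℂ) =
      ∫ t : ℝ, (((Real.exp (-(2 * b ^ 2) * t ^ 2) : ℝ) : ℂ) +
        (Real.exp (-(2 * b ^ 2) * t ^ 2) : ℝ) * wA t) := by
    rw [integral_add h1 hw, integral_odd_zero (f := fun t : ℝ =>
      (Real.exp (-(2 * b ^ 2) * t ^ 2) : ℝ) * wA t), add_zero, integral_complex_ofReal,
      integral_gaussian, Real.sqrt_div' _ (by positivity), Real.sqrt_mul (by norm_num),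
      Real.sqrt_sq hb0.le]
    intro t
    simp only [wA, neg_sq]; push_cast; ring
  rw [hmain, ← integral_indicator measurableSet_Ioi,
    ← integral_sub (g := fun t : ℝ => (((Real.exp (-(2 * b ^ 2) * t ^ 2) : ℝ) : ℂ) +
        (Real.exp (-(2 * b ^ 2) * t ^ 2) : ℝ) * wA t))
      (hi.integrable_indicator measurableSet_Ioi) (h1.add hw)]
  have hR : 3 * (2 * C) * (b ^ 7)⁻¹ = ∫ t : ℝ, 3 * (t ^ 6 * Real.exp (-(b ^ 2) * t ^ 2)) := by
    rw [integral_const_mul, moment_full 6 (by decide), hm b hb0]; ring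
  rw [hR]
  refine norm_integral_le_of_norm_le ((gauss_int 6 hb2).const_mul _) (Eventually.of_forall fun t => ?_)
  have hsplit : Real.exp (-(b ^ 2) * t ^ 2) =
      Real.exp (-(2 * b ^ 2) * t ^ 2) * Real.exp (b ^ 2 * t ^ 2) := by
    rw [← Real.exp_add]; ring_nf
  have hs : 0 ≤ b ^ 2 * t ^ 2 := by positivity
  have hwn : ‖wA t‖ ^ 2 ≤ t ^ 6 := by
    calc ‖wA t‖ ^ 2 ≤ (|t| ^ 3) ^ 2 := pow_le_pow_left₀ (norm_nonneg _) (wA_norm t) 2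
      _ = |t| ^ 6 := by ring
      _ = t ^ 6 := by rw [Even.pow_abs (by decide)]
  have key : ∀ z : ℂ, ‖z‖ ≤ 3 * t ^ 6 * Real.exp (b ^ 2 * t ^ 2) →
      ‖((Real.exp (-(2 * b ^ 2) * t ^ 2) : ℝ) : ℂ) * z‖ ≤
        3 * (t ^ 6 * Real.exp (-(b ^ 2) * t ^ 2)) := by
    intro z hz
    rw [norm_mul, norm_real, Real.norm_of_nonneg (Real.exp_pos _).le, hsplit]
    calc _ ≤ Real.exp (-(2 * b ^ 2) * t ^ 2) * (3 * t ^ 6 * Real.exp (b ^ 2 * t ^ 2)) := by gcongr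
      _ = _ := by ring
  by_cases ht : t ∈ Ioi (-(b ^ 2))
  · rw [indicator_of_mem ht]
    have h := exp_bd2 hs (wA_re_le hb2 ht)
    refine le_trans (le_of_eq ?_) (key (cexp (wA t) - 1 - wA t) (h.trans (by gcongr)))
    rw [gO]; congr 1; ring
  · rw [indicator_of_notMem ht]
    have ht' : t ≤ -(b ^ 2) := not_lt.mp ht
    have ht1 : 1 ≤ |t| := by rw [abs_of_neg (by linarith)]; linarith
    refine le_trans (le_of_eq ?_) (key (-(1 + wA t)) ?_)
    · congr 1; ring
    · rw [norm_neg]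
      have e1 : 1 ≤ |t| ^ 3 := one_le_pow₀ ht1
      have e2 : |t| ^ 6 = t ^ 6 := by rw [Even.pow_abs (by decide)]
      have e3 : 1 ≤ Real.exp (b ^ 2 * t ^ 2) := Real.one_le_exp hs
      have e4 := norm_add_le 1 (wA t)
      rw [norm_one] at e4
      have e5 := wA_norm t
      have e6 : 3 * t ^ 6 ≤ 3 * t ^ 6 * Real.exp (b ^ 2 * t ^ 2) :=
        le_mul_of_one_le_right (by positivity) e3
      rw [← e2] at e6 ⊢
      nlinarith

lemma est_I1 : ∃ C : ℝ, 0 < C ∧ ∀ b : ℝ, 1 ≤ b →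
    ‖∫ t in Ioi (-(b ^ 2)), (t : ℂ) * gO (b ^ 2) t‖ ≤ C * (b ^ 5)⁻¹ := by
  obtain ⟨C, hC, hm⟩ := moment 4
  refine ⟨2 * (2 * C), by positivity, fun b hb => ?_⟩
  have hb0 : 0 < b := by linarith
  have hb2 : 0 < b ^ 2 := by positivity
  have hb1 : 1 ≤ b ^ 2 := one_le_pow₀ hb
  have hi : IntegrableOn (fun t : ℝ => (t : ℂ) * gO (b ^ 2) t) (Ioi (-(b ^ 2))) := by
    simpa [gO] using obl_base_int 1 hb2
  have h1 : Integrable (fun t : ℝ => (t : ℂ) * ((Real.exp (-(2 * b ^ 2) * t ^ 2) : ℝ) : ℂ)) := by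
    simpa only [pow_one] using gauss_int_C 1 hb2
  have hmain : ∫ t : ℝ, (t : ℂ) * ((Real.exp (-(2 * b ^ 2) * t ^ 2) : ℝ) : ℂ) = 0 := by
    apply integral_odd_zero
    intro t
    simp only [neg_sq]; push_cast; ring
  rw [← sub_zero (∫ t in Ioi (-(b ^ 2)), (t : ℂ) * gO (b ^ 2) t), ← hmain,
    ← integral_indicator measurableSet_Ioi,
    ← integral_sub (hi.integrable_indicator measurableSet_Ioi) h1]
  have hR : 2 * (2 * C) * (b ^ 5)⁻¹ = ∫ t : ℝ, 2 * (t ^ 4 * Real.exp (-(b ^ 2) * t ^ 2)) := by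
    rw [integral_const_mul, moment_full 4 (by decide), hm b hb0]; ring
  rw [hR]
  refine norm_integral_le_of_norm_le ((gauss_int 4 hb2).const_mul _) (Eventually.of_forall fun t => ?_)
  have hsplit : Real.exp (-(b ^ 2) * t ^ 2) =
      Real.exp (-(2 * b ^ 2) * t ^ 2) * Real.exp (b ^ 2 * t ^ 2) := by
    rw [← Real.exp_add]; ring_nf
  have hs : 0 ≤ b ^ 2 * t ^ 2 := by positivity
  have e2 : |t| ^ 4 = t ^ 4 := by rw [Even.pow_abs (by decide)]
  have key : ∀ z : ℂ, ‖z‖ ≤ 2 * |t| ^ 3 * Real.exp (b ^ 2 * t ^ 2) →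
      ‖(t : ℂ) * ((Real.exp (-(2 * b ^ 2) * t ^ 2) : ℝ) : ℂ) * z‖ ≤
        2 * (t ^ 4 * Real.exp (-(b ^ 2) * t ^ 2)) := by
    intro z hz
    rw [norm_mul, norm_mul, norm_real, norm_real, Real.norm_of_nonneg (Real.exp_pos _).le, hsplit,
      Real.norm_eq_abs, ← e2]
    calc _ ≤ |t| * Real.exp (-(2 * b ^ 2) * t ^ 2) * (2 * |t| ^ 3 * Real.exp (b ^ 2 * t ^ 2)) := by gcongr
      _ = _ := by ring
  by_cases ht : t ∈ Ioi (-(b ^ 2))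
  · rw [indicator_of_mem ht]
    have h := exp_bd1 hs (wA_re_le hb2 ht)
    refine le_trans (le_of_eq ?_) (key (cexp (wA t) - 1) (h.trans (by gcongr; exact wA_norm t)))
    rw [gO]; congr 1; ring
  · rw [indicator_of_notMem ht]
    have ht' : t ≤ -(b ^ 2) := not_lt.mp ht
    have ht1 : 1 ≤ |t| := by rw [abs_of_neg (by linarith)]; linarith
    refine le_trans (le_of_eq ?_) (key (-1) ?_)
    · congr 1; ring
    · rw [norm_neg, norm_one]
      have e1 : 1 ≤ |t| ^ 3 := one_le_pow₀ ht1
      have e3 : 1 ≤ Real.exp (b ^ 2 * t ^ 2) := Real.one_le_exp hs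
      nlinarith

lemma est3 : ∃ C : ℝ, 0 < C ∧ ∀ b : ℝ, 1 ≤ b →
    |JA 0 (-(b ^ 4)) - √Real.pi / b * Real.cos ((2 / 3) * b ^ 6 - Real.pi / 4)| ≤ C * (b ^ 7)⁻¹ := by
  obtain ⟨C, hC, h0⟩ := est_I0
  refine ⟨2 * C, by positivity, fun b hb => ?_⟩
  have hb0 : 0 < b := by linarith
  have hb2 : 0 < b ^ 2 := by positivity
  have h0 := h0 b hb
  set I0 := ∫ t in Ioi (-(b ^ 2)), gO (b ^ 2) t with hI0
  set E := cexp ((-(2 / 3) * (b ^ 2) ^ 3 : ℝ) * I) with hE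
  have hEn : ‖E‖ = 1 := norm_exp_ofReal_mul_I _
  have h1 : JA 0 (-(b ^ 4)) = ((1 + I) * E * I0).re := by
    rw [show b ^ 4 = (b ^ 2) ^ 2 by ring, JA_obl zero_le_one hb2]
    simp_rw [fA_obl_formula, pow_zero, one_mul]
    rw [integral_const_mul, mul_assoc]
    rfl
  have h2 : √Real.pi / b * Real.cos ((2 / 3) * b ^ 6 - Real.pi / 4) =
      ((1 + I) * E * (√Real.pi / (√2 * b) : ℝ)).re := by
    rw [hE, exp_mul_I, ← ofReal_cos, ← ofReal_sin, mul_comm _ (((_ : ℝ) : ℂ)), re_ofReal_mul, Real.cos_sub,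
      Real.cos_pi_div_four, Real.sin_pi_div_four,
      show -(2 / 3) * (b ^ 2) ^ 3 = -((2 / 3) * b ^ 6) by ring, Real.cos_neg, Real.sin_neg]
    have hs : √2 * √2 = 2 := Real.mul_self_sqrt (by norm_num)
    have hs0 : 0 < √2 := by positivity
    simp only [mul_re, add_re, add_im, one_re, one_im, I_re, I_im, ofReal_re, ofReal_im, mul_im]
    generalize 2 / 3 * b ^ 6 = ζ
    field_simp
    linear_combination (Real.cos ζ + Real.sin ζ) * hs
  rw [h1, h2, ← sub_re, ← mul_sub]
  refine (abs_re_le_norm _).trans ?_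
  rw [norm_mul, norm_mul, hEn, mul_one, mul_assoc]
  have := norm_one_add_I
  gcongr
  linarith

lemma est4 : ∃ C : ℝ, 0 < C ∧ ∀ b : ℝ, 1 ≤ b →
    |JA 1 (-(b ^ 4)) - √Real.pi * b * Real.sin ((2 / 3) * b ^ 6 - Real.pi / 4)| ≤ C * (b ^ 5)⁻¹ := by
  obtain ⟨C, hC, h0⟩ := est_I0
  obtain ⟨C', hC', h0'⟩ := est_I1
  refine ⟨2 * (C + 2 * C'), by positivity, fun b hb => ?_⟩
  have hb0 : 0 < b := by linarith
  have hb2 : 0 < b ^ 2 := by positivity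
  have h0 := h0 b hb
  have h0' := h0' b hb
  set I0 := ∫ t in Ioi (-(b ^ 2)), gO (b ^ 2) t with hI0
  set I1 := ∫ t in Ioi (-(b ^ 2)), (t : ℂ) * gO (b ^ 2) t with hI1
  set E := cexp ((-(2 / 3) * (b ^ 2) ^ 3 : ℝ) * I) with hE
  have hEn : ‖E‖ = 1 := norm_exp_ofReal_mul_I _
  have hi0 : IntegrableOn (gO (b ^ 2)) (Ioi (-(b ^ 2))) := by
    refine (obl_base_int 0 hb2).congr (Eventually.of_forall fun t => ?_)
    simp only [pow_zero, one_mul, gO]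
  have hi1 : IntegrableOn (fun t : ℝ => (t : ℂ) * gO (b ^ 2) t) (Ioi (-(b ^ 2))) := by
    simpa [gO] using obl_base_int 1 hb2
  have h1 : JA 1 (-(b ^ 4)) =
      ((1 + I) * (I * E) * (((b ^ 2 : ℝ) : ℂ) * I0 + (1 + I) * I1)).re := by
    rw [show b ^ 4 = (b ^ 2) ^ 2 by ring, JA_obl le_rfl hb2]
    have e : ∀ t : ℝ, fA 1 (-((b ^ 2) ^ 2)) ((b ^ 2 : ℝ) + t * (1 + I)) =
        (I * E) * (((b ^ 2 : ℝ) : ℂ) * gO (b ^ 2) t + (1 + I) * (t * gO (b ^ 2) t)) := by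
      intro t
      rw [fA_obl_formula, gO, hE, pow_one]; ring
    simp_rw [e]
    rw [integral_const_mul, integral_add (hi0.const_mul _) (hi1.const_mul _), integral_const_mul,
      integral_const_mul, mul_assoc (1 + I)]
  have h2 : √Real.pi * b * Real.sin ((2 / 3) * b ^ 6 - Real.pi / 4) =
      ((1 + I) * (I * E) * (((b ^ 2 : ℝ) : ℂ) * (√Real.pi / (√2 * b) : ℝ))).re := by
    rw [hE, exp_mul_I, ← ofReal_cos, ← ofReal_sin, ← ofReal_mul, mul_comm _ (((_ : ℝ) : ℂ)), re_ofReal_mul, Real.sin_sub,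
      Real.cos_pi_div_four, Real.sin_pi_div_four,
      show -(2 / 3) * (b ^ 2) ^ 3 = -((2 / 3) * b ^ 6) by ring, Real.cos_neg, Real.sin_neg]
    have hs : √2 * √2 = 2 := Real.mul_self_sqrt (by norm_num)
    have hs0 : 0 < √2 := by positivity
    simp only [mul_re, add_re, add_im, one_re, one_im, I_re, I_im, ofReal_re, ofReal_im, mul_im]
    generalize 2 / 3 * b ^ 6 = ζ
    field_simp
    linear_combination (Real.sin ζ - Real.cos ζ) * hs
  rw [h1, h2, ← sub_re, ← mul_sub]
  refine (abs_re_le_norm _).trans ?_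
  rw [norm_mul, norm_mul, norm_mul, hEn, norm_I, mul_one, mul_one, mul_assoc]
  have h3 := norm_one_add_I
  have h4 : ‖((b ^ 2 : ℝ) : ℂ) * I0 + (1 + I) * I1 - ((b ^ 2 : ℝ) : ℂ) * (√Real.pi / (√2 * b) : ℝ)‖
      ≤ (C + 2 * C') * (b ^ 5)⁻¹ := by
    rw [show ((b ^ 2 : ℝ) : ℂ) * I0 + (1 + I) * I1 - ((b ^ 2 : ℝ) : ℂ) * (√Real.pi / (√2 * b) : ℝ) =
      ((b ^ 2 : ℝ) : ℂ) * (I0 - (√Real.pi / (√2 * b) : ℝ)) + (1 + I) * I1 by ring]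
    refine (norm_add_le _ _).trans ?_
    rw [norm_mul, norm_mul, norm_real, Real.norm_of_nonneg hb2.le]
    calc _ ≤ b ^ 2 * (C * (b ^ 7)⁻¹) + 2 * (C' * (b ^ 5)⁻¹) := by gcongr; linarith
      _ = _ := by field_simp
  gcongr
  linarith

end AiryHelpers

/-- classical Plancherel–Rotach type asymptotics for the Airy function and its
derivative, with explicit error bounds for `x ≥ 1`. -/
theorem airy_asymptotics :
    ∃ C : ℝ, 0 < C ∧ ∀ x : ℝ, 1 ≤ x →
      |2 * Real.sqrt Real.pi * x ^ ((1:ℝ)/4) * Real.exp ((2/3) * x ^ ((3:ℝ)/2)) * Ai x - 1|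
          ≤ C * x ^ (-(3:ℝ)/2) ∧
      |2 * Real.sqrt Real.pi * x ^ (-(1:ℝ)/4) * Real.exp ((2/3) * x ^ ((3:ℝ)/2)) * deriv Ai x + 1|
          ≤ C * x ^ (-(3:ℝ)/2) ∧
      |Ai (-x) - Real.pi ^ (-(1:ℝ)/2) * x ^ (-(1:ℝ)/4) *
          Real.cos ((2/3) * x ^ ((3:ℝ)/2) - Real.pi / 4)| ≤ C * x ^ (-(7:ℝ)/4) ∧
      |deriv Ai (-x) - Real.pi ^ (-(1:ℝ)/2) * x ^ ((1:ℝ)/4) *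
          Real.sin ((2/3) * x ^ ((3:ℝ)/2) - Real.pi / 4)| ≤ C * x ^ (-(5:ℝ)/4) := by
  obtain ⟨C1, hC1, h1⟩ := est1
  obtain ⟨C2, hC2, h2⟩ := est2
  obtain ⟨C3, hC3, h3⟩ := est3
  obtain ⟨C4, hC4, h4⟩ := est4
  refine ⟨2 * C1 + 2 * C2 + C3 + C4, by positivity, fun x hx => ?_⟩
  have hx0 : 0 < x := by linarith
  obtain ⟨b, hb⟩ : ∃ b : ℝ, b = x ^ ((1:ℝ)/4) := ⟨_, rfl⟩
  have hb1 : 1 ≤ b := by rw [hb]; exact Real.one_le_rpow hx (by norm_num)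
  have hb0 : 0 < b := by linarith
  have hxb : x = b ^ 4 := by
    rw [hb, ← Real.rpow_natCast, ← Real.rpow_mul hx0.le]; norm_num
  have pw : ∀ (r : ℝ) (k : ℕ), r = k / 4 → x ^ r = b ^ k := by
    intro r k h
    rw [hb, ← Real.rpow_natCast, ← Real.rpow_mul hx0.le, h]; congr 1; ring
  have pwn : ∀ (r : ℝ) (k : ℕ), r = -(k / 4) → x ^ r = (b ^ k)⁻¹ := by
    intro r k h
    rw [h, Real.rpow_neg hx0.le, pw _ k rfl]
  rw [pw ((1:ℝ)/4) 1 (by norm_num), pw ((3:ℝ)/2) 6 (by norm_num), pwn (-(3:ℝ)/2) 6 (by norm_num),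
    pwn (-(1:ℝ)/4) 1 (by norm_num), pwn (-(7:ℝ)/4) 7 (by norm_num), pwn (-(5:ℝ)/4) 5 (by norm_num),
    Ai_eq, Ai_eq, deriv_Ai_eq, deriv_Ai_eq, hxb, pow_one]
  have h1 := h1 b hb1
  have h2 := h2 b hb1
  have h3 := h3 b hb1
  have h4 := h4 b hb1
  have hpi : 1 ≤ Real.pi := by linarith [Real.pi_gt_three]
  have hpi0 : 0 < Real.pi := Real.pi_pos
  obtain ⟨s, hs⟩ : ∃ s : ℝ, s = √Real.pi := ⟨_, rfl⟩
  have hs0 : 0 < s := by rw [hs]; positivity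
  have hs2 : Real.pi = s ^ 2 := by rw [hs, Real.sq_sqrt hpi0.le]
  have hs1 : 1 ≤ s := by rw [hs]; exact Real.one_le_sqrt.mpr hpi
  have hsp : Real.pi ^ (-(1:ℝ)/2) = s⁻¹ := by
    rw [hs, Real.sqrt_eq_rpow, ← Real.rpow_neg hpi0.le]; norm_num
  have hsi : s⁻¹ ≤ 1 := inv_le_one_of_one_le₀ hs1
  obtain ⟨e, he⟩ : ∃ e : ℝ, e = Real.exp ((2/3) * b ^ 6) := ⟨_, rfl⟩
  have he0 : 0 < e := by rw [he]; positivity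
  have hen : Real.exp (-(2/3) * b ^ 6) = e⁻¹ := by rw [he, ← Real.exp_neg]; ring_nf
  rw [hen, ← hs] at h1 h2
  rw [← hs] at h3 h4
  rw [hsp, ← hs, ← he]
  have hip : 1 / Real.pi = (s ^ 2)⁻¹ := by rw [hs2]; simp
  rw [hip]
  have hs2i : (s ^ 2)⁻¹ ≤ 1 := inv_le_one_of_one_le₀ (one_le_pow₀ hs1)
  refine ⟨?_, ?_, ?_, ?_⟩
  · have E1 : 2 * s * b * e * ((s ^ 2)⁻¹ * JA 0 (b ^ 4)) - 1 =
        (2 * b * e * s⁻¹) * (JA 0 (b ^ 4) - e⁻¹ * (s / (2 * b))) := by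
      field_simp
    rw [E1, abs_mul, abs_of_pos (by positivity)]
    calc _ ≤ (2 * b * e * 1) * (C1 * e⁻¹ * (b ^ 7)⁻¹) := by gcongr
      _ = (2 * C1) * (b ^ 6)⁻¹ := by field_simp
      _ ≤ _ := by gcongr; linarith
  · have E1 : 2 * s * b⁻¹ * e * ((s ^ 2)⁻¹ * JA 1 (b ^ 4)) + 1 =
        (2 * b⁻¹ * e * s⁻¹) * (JA 1 (b ^ 4) + e⁻¹ * (b * s / 2)) := by
      field_simp
    rw [E1, abs_mul, abs_of_pos (by positivity)]
    calc _ ≤ (2 * b⁻¹ * e * 1) * (C2 * e⁻¹ * (b ^ 5)⁻¹) := by gcongr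
      _ = (2 * C2) * (b ^ 6)⁻¹ := by field_simp
      _ ≤ _ := by gcongr; linarith
  · have E1 : (s ^ 2)⁻¹ * JA 0 (-b ^ 4) - s⁻¹ * b⁻¹ * Real.cos (2 / 3 * b ^ 6 - Real.pi / 4) =
        (s ^ 2)⁻¹ * (JA 0 (-b ^ 4) - s / b * Real.cos (2 / 3 * b ^ 6 - Real.pi / 4)) := by
      field_simp
    rw [E1, abs_mul, abs_of_pos (by positivity : 0 < (s ^ 2)⁻¹)]
    calc _ ≤ 1 * (C3 * (b ^ 7)⁻¹) := by gcongr
      _ = C3 * (b ^ 7)⁻¹ := one_mul _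
      _ ≤ _ := by gcongr; linarith
  · have E1 : (s ^ 2)⁻¹ * JA 1 (-b ^ 4) - s⁻¹ * b * Real.sin (2 / 3 * b ^ 6 - Real.pi / 4) =
        (s ^ 2)⁻¹ * (JA 1 (-b ^ 4) - s * b * Real.sin (2 / 3 * b ^ 6 - Real.pi / 4)) := by
      field_simp
    rw [E1, abs_mul, abs_of_pos (by positivity : 0 < (s ^ 2)⁻¹)]
    calc _ ≤ 1 * (C4 * (b ^ 5)⁻¹) := by gcongr
      _ = C4 * (b ^ 5)⁻¹ := one_mul _
      _ ≤ _ := by gcongr; linarith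
end

section
/- (i) 2·√π·x^{3/4}·e^{(2/3)·x^{3/2}}·(1/3 − ∫_0^x Ai(u) du) → 1 as x → ∞. (ii) There is C > 0 with |∫_{−x}^0 Ai(u) du − 2/3| ≤ C·x^{−3/4} for all x ≥ 1. (iii) Ai is Lebesgue integrable on (a, ∞) for every a ∈ ℝ, and there is C > 0 with |1 − ∫_{−x}^∞ Ai(u) du| ≤ C·x^{−3/4} for all x ≥ 1. -/
open MeasureTheory Filter Set

section AiryAux

open Complex

/-- the Airy phase -/
noncomputable def aE (w z : ℂ) : ℂ := Complex.exp (I * (z ^ 3 / 3 + w * z))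

noncomputable def aAl : ℂ := ((√3 / 2 : ℝ) : ℂ) + ((1 / 2 : ℝ) : ℂ) * I
noncomputable def aOm : ℂ := ((-1 / 2 : ℝ) : ℂ) + ((√3 / 2 : ℝ) : ℂ) * I
noncomputable def aOm' : ℂ := ((-1 / 2 : ℝ) : ℂ) - ((√3 / 2 : ℝ) : ℂ) * I

noncomputable def aR (w : ℂ) : ℂ :=
  ∫ r in Ioi (0:ℝ), Complex.exp (-(r:ℂ) ^ 3 / 3 + w * r)

noncomputable def aP (w : ℂ) : ℂ :=
  ∫ r in Ioi (0:ℝ), (Complex.exp (-(r:ℂ) ^ 3 / 3 + w * r) - Complex.exp (-(r:ℂ) ^ 3 / 3)) / r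

lemma aSq3 : ((√3 : ℝ) : ℂ) ^ 2 = 3 := by
  rw [← Complex.ofReal_pow, Real.sq_sqrt (by norm_num)]; norm_num

lemma aAl_cube : aAl ^ 3 = I := by
  unfold aAl
  push_cast
  have h := aSq3
  have hI : I ^ 2 = -1 := I_sq
  linear_combination ((√3:ℂ) / 8 + 3 / 8 * I) * h + (3 / 8 * (√3 : ℂ) + I / 8) * hI

lemma aI_mul_aAl : I * aAl = aOm := by
  unfold aAl aOm
  push_cast
  linear_combination (1/2) * I_sq

lemma aE_norm (w : ℂ) (s y : ℝ) :
    ‖aE w (s + y * I)‖ = Real.exp (-(y * s ^ 2) + y ^ 3 / 3 - w.re * y - w.im * s) := by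
  unfold aE
  rw [Complex.norm_exp]
  congr 1
  have : I * (((s:ℂ) + y * I) ^ 3 / 3 + w * (s + y * I)) =
      I * ((s ^ 3 / 3 - s * y ^ 2 : ℝ) : ℂ) + ((-(y * s ^ 2) + y ^ 3 / 3 : ℝ) : ℂ)
        + I * (w * (s + y * I)) := by
    push_cast
    linear_combination ((s:ℂ)^2*y - y^3/3 + I * s * y^2 + I^2 * y^3/3) * I_sq
  rw [this]
  simp only [add_re, mul_re, I_re, I_im, ofReal_re, ofReal_im, mul_im, add_im]
  ring

lemma aE_ray (w : ℂ) (r : ℝ) : aE w (r * aAl) = Complex.exp (-(r:ℂ) ^ 3 / 3 + aOm * w * r) := by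
  unfold aE
  congr 1
  rw [← aI_mul_aAl, mul_pow, aAl_cube]
  linear_combination (r:ℂ)^3/3 * I_sq

lemma aE_diff (w : ℂ) : Differentiable ℂ (aE w) := by
  unfold aE; fun_prop

@[fun_prop]
lemma aE_cont (w : ℂ) : Continuous (aE w) := (aE_diff w).continuous

lemma aCubic_int (M : ℝ) : IntegrableOn (fun r : ℝ => Real.exp (-r ^ 3 / 3 + M * r)) (Ioi 0) := by
  apply integrable_of_isBigO_exp_neg (b := 1) one_pos
  · fun_prop
  · apply Asymptotics.IsBigO.of_bound 1
    filter_upwards [eventually_ge_atTop (3 * (|M| + 1)), eventually_ge_atTop 1] with r hr h1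
    rw [Real.norm_eq_abs, Real.norm_eq_abs, Real.abs_exp, Real.abs_exp, one_mul]
    apply Real.exp_le_exp.mpr
    have := le_abs_self M
    have h2 : 3 * (M + 1) ≤ r ^ 2 := by nlinarith [abs_nonneg M]
    nlinarith

lemma aCubic_norm (w : ℂ) (r : ℝ) (hr : 0 < r) :
    ‖Complex.exp (-(r:ℂ) ^ 3 / 3 + w * r)‖ ≤ Real.exp (-r ^ 3 / 3 + ‖w‖ * r) := by
  rw [Complex.norm_exp]
  apply Real.exp_le_exp.mpr
  have : (-(r:ℂ) ^ 3 / 3 + w * r) = ((-r ^ 3 / 3 : ℝ) : ℂ) + w * r := by push_cast; ring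
  rw [this]
  simp only [add_re, ofReal_re, mul_re, ofReal_im, mul_zero, sub_zero]
  have := re_le_norm w
  nlinarith

lemma aR_int (w : ℂ) :
    IntegrableOn (fun r : ℝ => Complex.exp (-(r:ℂ) ^ 3 / 3 + w * r)) (Ioi 0) := by
  refine Integrable.mono' (aCubic_int ‖w‖) (by fun_prop) ?_
  exact (ae_restrict_iff' measurableSet_Ioi).mpr (ae_of_all _ fun r hr => aCubic_norm w r hr)

/-- derivative of `aP`. -/
lemma aP_int (w : ℂ) : IntegrableOn (fun r : ℝ =>
    (Complex.exp (-(r:ℂ) ^ 3 / 3 + w * r) - Complex.exp (-(r:ℂ) ^ 3 / 3)) / r) (Ioi 0) := by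
  refine Integrable.mono' ((aCubic_int ‖w‖).const_mul ‖w‖) (by
    refine AEStronglyMeasurable.div₀ ?_ ?_ <;> fun_prop) ?_
  refine (ae_restrict_iff' measurableSet_Ioi).mpr (ae_of_all _ fun r hr => ?_)
  have hr : (0:ℝ) < r := hr
  rw [Complex.exp_add, norm_div, Complex.norm_real, Real.norm_eq_abs, abs_of_pos hr, div_le_iff₀ hr]
  have h1 : Complex.exp (-(r:ℂ) ^ 3 / 3) * Complex.exp (w * r) - Complex.exp (-(r:ℂ) ^ 3 / 3)
    = Complex.exp (-(r:ℂ) ^ 3 / 3) * (Complex.exp (w * r) - 1) := by ring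
  rw [h1, norm_mul]
  have h2 : ‖Complex.exp (-(r:ℂ) ^ 3 / 3)‖ = Real.exp (-r ^ 3 / 3) := by
    rw [Complex.norm_exp]
    have : (-(r:ℂ) ^ 3 / 3) = ((-r ^ 3 / 3 : ℝ) : ℂ) := by push_cast; ring
    rw [this, ofReal_re]
  have h3 : ‖Complex.exp (w * r) - 1‖ ≤ ‖w * r‖ * Real.exp ‖w * r‖ := by
    have := Complex.norm_exp_sub_sum_le_norm_mul_exp (w * r) 1
    simpa using this
  rw [h2, Real.exp_add]
  rw [norm_mul, Complex.norm_real, Real.norm_eq_abs, abs_of_pos hr] at h3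
  calc _ ≤ Real.exp (-r ^ 3 / 3) * (‖w‖ * r * Real.exp (‖w‖ * r)) := by gcongr
    _ = _ := by ring

lemma aP_deriv (w : ℂ) : HasDerivAt aP (aR w) w := by
  have key := hasDerivAt_integral_of_dominated_loc_of_deriv_le
    (μ := volume.restrict (Ioi (0:ℝ)))
    (F := fun (w : ℂ) (r : ℝ) =>
      (Complex.exp (-(r:ℂ) ^ 3 / 3 + w * r) - Complex.exp (-(r:ℂ) ^ 3 / 3)) / r)
    (F' := fun (w : ℂ) (r : ℝ) => Complex.exp (-(r:ℂ) ^ 3 / 3 + w * r))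
    (x₀ := w) (s := Metric.ball w 1)
    (bound := fun r : ℝ => Real.exp (-r ^ 3 / 3 + (‖w‖ + 1) * r))
    (Metric.ball_mem_nhds w one_pos)
    (Eventually.of_forall fun v => (aP_int v).aestronglyMeasurable) (aP_int w) (by fun_prop)
    ?_ (aCubic_int _) ?_
  · exact key.2
  · refine (ae_restrict_iff' measurableSet_Ioi).mpr (ae_of_all _ fun r hr v hv => ?_)
    have hr : (0:ℝ) < r := hr
    refine (aCubic_norm v r hr).trans ?_
    have : ‖v‖ ≤ ‖w‖ + 1 := by
      have h1 : ‖v - w‖ < 1 := by simpa [dist_eq_norm] using hv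
      have := norm_le_norm_add_norm_sub' v w
      linarith
    gcongr
  · refine (ae_restrict_iff' measurableSet_Ioi).mpr (ae_of_all _ fun r hr v hv => ?_)
    have hr : (r:ℂ) ≠ 0 := by exact_mod_cast (ne_of_gt hr)
    have h1 : HasDerivAt (fun v : ℂ => -(r:ℂ) ^ 3 / 3 + v * r) (r:ℂ) v := by
      simpa using ((hasDerivAt_id v).mul_const (r:ℂ)).const_add (-(r:ℂ) ^ 3 / 3)
    have h2 := ((h1.cexp).sub_const (Complex.exp (-(r:ℂ) ^ 3 / 3))).div_const (r:ℂ)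
    rw [mul_div_assoc, div_self hr, mul_one] at h2
    exact h2

end AiryAux

section AiryContour

open Complex

lemma aRight_eq (w : ℂ) (c r : ℝ) :
    ∫ s in (0:ℝ)..(√3 / 2 * r), aE w (s + c * I) =
      aAl * (∫ t in (0:ℝ)..r, Complex.exp (-(t:ℂ) ^ 3 / 3 + aOm * w * t))
        - I * (∫ y in c..(r / 2), aE w (((√3 / 2 * r : ℝ) : ℂ) + y * I))
        - I * ∫ y in (0:ℝ)..c, aE w (y * I) := by
  obtain ⟨G, hG⟩ := (aE_diff w).isExactOn_univ
  have hG : ∀ z, HasDerivAt G (aE w z) z := fun z => hG z (mem_univ z)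
  -- general path
  have path : ∀ (p d : ℂ) (a b : ℝ),
      ∫ t in a..b, aE w (p + t * d) * d = G (p + b * d) - G (p + a * d) := by
    intro p d a b
    apply intervalIntegral.integral_eq_sub_of_hasDerivAt (f := fun t : ℝ => G (p + t * d))
    · intro t _
      have h1 : HasDerivAt (fun t : ℝ => p + (t:ℂ) * d) d t := by
        have := ((Complex.ofRealCLM.hasDerivAt (x := t)).mul_const d).const_add p
        simpa using this
      exact (hG _).comp_of_eq t h1 rfl
    · apply Continuous.intervalIntegrable
      fun_prop
  have h1 := path (c * I) 1 0 (√3 / 2 * r)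
  have h2 := path 0 aAl 0 r
  have h3 := path ((√3 / 2 * r : ℝ) : ℂ) I c (r / 2)
  have h4 := path 0 I 0 c
  simp only [intervalIntegral.integral_mul_const] at h1 h2 h3 h4
  simp only [zero_add, mul_one, aE_ray] at h1 h2 h3 h4
  have e1 : ∫ s in (0:ℝ)..(√3 / 2 * r), aE w (s + c * I)
      = ∫ s in (0:ℝ)..(√3 / 2 * r), aE w (c * I + s) := by simp only [add_comm]
  rw [e1, h1]
  have e2 : (r:ℂ) * aAl = ((√3 / 2 * r : ℝ) : ℂ) + ((r / 2 : ℝ) : ℂ) * I := by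
    unfold aAl; push_cast; ring
  rw [e2] at h2
  have e3 : (c:ℂ) * I + ((√3 / 2 * r : ℝ) : ℂ) = ((√3 / 2 * r : ℝ) : ℂ) + c * I := by ring
  rw [e3]
  simp only [ofReal_zero, zero_mul, add_zero] at h1 h2 h3 h4 ⊢
  linear_combination -h2 + h3 + h4

lemma aVert_tendsto (w : ℂ) (c : ℝ) (hc : 0 ≤ c) (h : 0 < c ∨ w.im = 0) :
    Tendsto (fun r : ℝ => ∫ y in c..(r / 2), aE w (((√3 / 2 * r : ℝ) : ℂ) + y * I))
      atTop (nhds 0) := by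
  have hs3 : (0:ℝ) < √3 := by positivity
  have hs : Tendsto (fun r : ℝ => √3 / 2 * r) atTop atTop :=
    tendsto_id.const_mul_atTop (by positivity)
  have hlim : Tendsto (fun r : ℝ => 1 / ((√3 / 2 * r) ^ 2 / 2)) atTop (nhds 0) := by
    apply Tendsto.div_atTop tendsto_const_nhds
    apply Tendsto.atTop_div_const (by norm_num)
    exact (tendsto_pow_atTop (by norm_num)).comp hs
  refine squeeze_zero_norm' ?_ hlim
  have ev : ∀ᶠ r : ℝ in atTop, -(c * (√3 / 2 * r) ^ 2 / 2) + |w.im| * (√3 / 2 * r) ≤ 0 := by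
    rcases h with h | h
    · filter_upwards [hs.eventually_ge_atTop (2 * |w.im| / c), hs.eventually_ge_atTop 0]
        with r hr h0
      rw [div_le_iff₀ h] at hr
      nlinarith
    · filter_upwards with r
      rw [h]; simp; positivity
  have ev2 : ∀ᶠ r : ℝ in atTop, 18 / 7 * ‖w‖ ≤ (√3 / 2 * r) ^ 2 := by
    exact ((tendsto_pow_atTop (n := 2) (by norm_num)).comp hs).eventually_ge_atTop _
  filter_upwards [ev, ev2, eventually_ge_atTop (2 * c), eventually_gt_atTop 0] with r h1 h2 h3 h4
  have hs0 : 0 < √3 / 2 * r := by positivity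
  have hsr : (r / 2) ^ 2 = (√3 / 2 * r) ^ 2 / 3 := by
    have : √3 ^ 2 = 3 := Real.sq_sqrt (by norm_num)
    nlinarith
  set s := √3 / 2 * r with hsdef
  set k := s ^ 2 / 2 with hk
  have hk0 : 0 < k := by positivity
  have hint : ∫ y in c..(r / 2), Real.exp (-((y - c) * k)) ≤ 1 / k := by
    have : ∫ y in c..(r / 2), Real.exp (-((y - c) * k))
        = -(Real.exp (-((r / 2 - c) * k)) / k) - -(Real.exp (-((c - c) * k)) / k) := by
      apply intervalIntegral.integral_eq_sub_of_hasDerivAt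
        (f := fun y : ℝ => -(Real.exp (-((y - c) * k)) / k))
      · intro y _
        have h1 : HasDerivAt (fun y : ℝ => -((y - c) * k)) (-k) y := by
          have h0 := (((hasDerivAt_id y).sub_const c).mul_const k).neg
          rw [one_mul] at h0
          exact h0
        have h2 := (h1.exp.div_const k).neg
        have h3 : -(Real.exp (-((y - c) * k)) * -k / k) = Real.exp (-((y - c) * k)) := by
          field_simp
        rw [h3] at h2
        exact h2
      · apply Continuous.intervalIntegrable
        fun_prop
    rw [this]
    have := Real.exp_pos (-((r / 2 - c) * k))
    have h5 : 0 < Real.exp (-((r / 2 - c) * k)) / k := by positivity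
    simp only [sub_self, zero_mul, neg_zero, Real.exp_zero]
    linarith
  refine le_trans ?_ hint
  apply intervalIntegral.norm_integral_le_of_norm_le (by linarith)
  · refine ae_of_all _ fun y hy => ?_
    rw [aE_norm]
    apply Real.exp_le_exp.mpr
    have hy0 : 0 ≤ y := hc.trans hy.1.le
    have hy2 : y ^ 2 ≤ s ^ 2 / 3 := by
      rw [← hsr]; exact pow_le_pow_left₀ hy0 hy.2 2
    have hy3 : y ^ 3 / 3 ≤ y * (s ^ 2 / 9) := by nlinarith
    have hw1 : -w.re * y ≤ ‖w‖ * y := by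
      have := (abs_le.mp (abs_re_le_norm w)).1
      nlinarith
    have hw2 : -w.im * s ≤ |w.im| * s := by
      have := neg_abs_le w.im
      nlinarith
    have hw3 : ‖w‖ * y ≤ 7 / 18 * s ^ 2 * y := by nlinarith
    rw [hk]
    nlinarith
  · apply Continuous.intervalIntegrable
    fun_prop

lemma aRight_tendsto (w : ℂ) (c : ℝ) (hc : 0 ≤ c) (h : 0 < c ∨ w.im = 0) :
    Tendsto (fun b : ℝ => ∫ s in (0:ℝ)..b, aE w (s + c * I)) atTop
      (nhds (aAl * aR (aOm * w) - I * ∫ y in (0:ℝ)..c, aE w (y * I))) := by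
  have h1 : Tendsto (fun r : ℝ => ∫ s in (0:ℝ)..(√3 / 2 * r), aE w (s + c * I)) atTop
      (nhds (aAl * aR (aOm * w) - I * 0 - I * ∫ y in (0:ℝ)..c, aE w (y * I))) := by
    simp only [aRight_eq]
    refine Tendsto.sub (Tendsto.sub (Tendsto.const_mul _ ?_)
      ((aVert_tendsto w c hc h).const_mul I)) tendsto_const_nhds
    exact intervalIntegral_tendsto_integral_Ioi 0 (aR_int _) tendsto_id
  have h2 : Tendsto (fun b : ℝ => b * (2 / √3)) atTop atTop :=
    tendsto_id.atTop_mul_const (by positivity)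
  have h3 := h1.comp h2
  simp only [mul_zero, sub_zero] at h3
  refine h3.congr fun b => ?_
  have : √3 / 2 * (b * (2 / √3)) = b := by
    have : √3 ≠ 0 := by positivity
    field_simp
  simp only [Function.comp, this]

lemma aAi_eq (x : ℝ) : Ai x = 1 / Real.pi * (aAl * aR (aOm * x)).re := by
  have h := aRight_tendsto x 0 le_rfl (Or.inr (by simp))
  simp only [intervalIntegral.integral_same, mul_zero, sub_zero, ofReal_zero, zero_mul,
    add_zero] at h
  have h2 := (Complex.continuous_re.tendsto _).comp h
  unfold Ai
  congr 1
  apply Tendsto.limUnder_eq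
  refine h2.congr fun b => ?_
  simp only [Function.comp]
  have : ∫ s in (0:ℝ)..b, Real.cos (s ^ 3 / 3 + x * s) = ∫ s in (0:ℝ)..b, reCLM (aE x s) := by
    congr 1
    ext s
    unfold aE
    have : I * ((s:ℂ) ^ 3 / 3 + x * s) = ((s ^ 3 / 3 + x * s : ℝ) : ℂ) * I := by push_cast; ring
    rw [this, reCLM_apply, exp_ofReal_mul_I_re]
  rw [this, ContinuousLinearMap.intervalIntegral_comp_comm]
  · rfl
  · apply Continuous.intervalIntegrable
    fun_prop

end AiryContour

section AiryPrim

open Complex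

noncomputable def aAl' : ℂ := ((√3 / 2 : ℝ) : ℂ) - ((1 / 2 : ℝ) : ℂ) * I

noncomputable def aD (w : ℂ) : ℂ :=
  (1 / (2 * Real.pi * I)) * (aP (aOm * w) - aP (aOm' * w))

noncomputable def aA (w : ℂ) : ℂ :=
  (1 / (2 * Real.pi)) * (aAl * aR (aOm * w) + aAl' * aR (aOm' * w))

noncomputable def aB (c : ℝ) (w : ℂ) : ℂ :=
  (1 / (2 * Real.pi)) * ∫ s : ℝ, I * aE w (s + c * I) / (s + c * I)

lemma aPi_ne : (Real.pi : ℂ) ≠ 0 := by exact_mod_cast Real.pi_ne_zero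

lemma aI_mul_aAl' : I * aAl' = - aOm' := by
  unfold aAl' aOm'
  push_cast
  linear_combination (-1/2) * I_sq

lemma aD_deriv (w : ℂ) : HasDerivAt aD (aA w) w := by
  have h1 : HasDerivAt (fun w => aP (aOm * w)) (aR (aOm * w) * aOm) w := by
    have h0 := (hasDerivAt_id w).const_mul aOm
    rw [mul_one] at h0
    exact (aP_deriv (aOm * w)).comp_of_eq w h0 rfl
  have h2 : HasDerivAt (fun w => aP (aOm' * w)) (aR (aOm' * w) * aOm') w := by
    have h0 := (hasDerivAt_id w).const_mul aOm'
    rw [mul_one] at h0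
    exact (aP_deriv (aOm' * w)).comp_of_eq w h0 rfl
  have h3 := (h1.sub h2).const_mul (1 / (2 * Real.pi * I))
  have : (1 / (2 * Real.pi * I)) * (aR (aOm * w) * aOm - aR (aOm' * w) * aOm') = aA w := by
    unfold aA
    have hp := aPi_ne
    have hI := I_ne_zero
    have e2 : aOm' = - (I * aAl') := by rw [aI_mul_aAl']; ring
    rw [← aI_mul_aAl]
    generalize aR (I * aAl * w) = X
    generalize aR (aOm' * w) = Y
    rw [e2]
    field_simp
    ring
  rw [this] at h3
  exact h3

lemma aConj3 : (starRingEnd ℂ) 3 = 3 := by simpa using conj_ofReal 3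

lemma aInt_conj (f : ℝ → ℂ) (a b : ℝ) :
    ∫ x in a..b, (starRingEnd ℂ) (f x) = (starRingEnd ℂ) (∫ x in a..b, f x) := by
  rw [intervalIntegral, intervalIntegral, integral_conj, integral_conj, map_sub]

lemma aR_conj (w : ℂ) : (starRingEnd ℂ) (aR w) = aR ((starRingEnd ℂ) w) := by
  unfold aR
  rw [← integral_conj]
  congr 1
  ext r
  rw [← exp_conj]
  simp [aConj3]

lemma aAl_conj : (starRingEnd ℂ) aAl = aAl' := by
  unfold aAl aAl'
  rw [map_add, map_mul, conj_ofReal, conj_ofReal, conj_I]; ring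

lemma aOm_conj : (starRingEnd ℂ) aOm = aOm' := by
  unfold aOm aOm'
  rw [map_add, map_mul, conj_ofReal, conj_ofReal, conj_I]; ring

lemma aAi_aA (x : ℝ) : aA x = ((Ai x : ℝ) : ℂ) := by
  rw [aAi_eq]
  unfold aA
  have : aAl' * aR (aOm' * x) = (starRingEnd ℂ) (aAl * aR (aOm * x)) := by
    rw [map_mul, aR_conj, map_mul, aAl_conj, aOm_conj, conj_ofReal]
  rw [this, add_conj]
  have hp := aPi_ne
  push_cast
  field_simp

lemma aE_bound (w : ℂ) (c M : ℝ) (hc : 0 < c) (hM : ‖w‖ ≤ M) (s : ℝ) :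
    ‖aE w (s + c * I)‖ ≤
      Real.exp (c ^ 3 / 3 + M * c + M ^ 2 / (2 * c)) * Real.exp (-(c / 2) * s ^ 2) := by
  rw [aE_norm, ← Real.exp_add]
  apply Real.exp_le_exp.mpr
  have h1 : -w.re * c ≤ M * c := by
    have := (abs_le.mp (abs_re_le_norm w)).1
    nlinarith
  have h2 : -w.im * s ≤ M * |s| := by
    calc -w.im * s ≤ |-w.im * s| := le_abs_self _
      _ = |w.im| * |s| := by rw [abs_mul, abs_neg]
      _ ≤ M * |s| := by
        have := abs_im_le_norm w
        gcongr
        linarith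
  have h3 : M * |s| ≤ c / 2 * s ^ 2 + M ^ 2 / (2 * c) := by
    have : c / 2 * s ^ 2 + M ^ 2 / (2 * c) - M * |s| = (c * |s| - M) ^ 2 / (2 * c) := by
      field_simp
      rw [← sq_abs s]; ring
    have h4 : 0 ≤ (c * |s| - M) ^ 2 / (2 * c) := by positivity
    linarith
  linarith

lemma aE_int (w : ℂ) (c : ℝ) (hc : 0 < c) : Integrable (fun s : ℝ => aE w (s + c * I)) := by
  refine Integrable.mono' ((integrable_exp_neg_mul_sq (b := c / 2) (by positivity)).const_mul
    (Real.exp (c ^ 3 / 3 + ‖w‖ * c + ‖w‖ ^ 2 / (2 * c)))) ?_ ?_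
  · apply Continuous.aestronglyMeasurable
    fun_prop
  · exact ae_of_all _ fun s => aE_bound w c _ hc le_rfl s

lemma aE_conj (w z : ℂ) :
    (starRingEnd ℂ) (aE ((starRingEnd ℂ) w) z) = aE w (-(starRingEnd ℂ) z) := by
  unfold aE
  rw [← exp_conj]
  congr 1
  simp only [map_mul, map_add, map_div₀, map_pow, conj_I, conj_conj]
  rw [aConj3]
  ring

lemma aHor (w : ℂ) (c : ℝ) (hc : 0 < c) :
    ∫ s : ℝ, aE w (s + c * I) = 2 * Real.pi * aA w := by
  have h1 := intervalIntegral_tendsto_integral (aE_int w c hc) tendsto_neg_atTop_atBot tendsto_id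
  have hr := aRight_tendsto w c hc.le (Or.inl hc)
  have hl := (Complex.continuous_conj.tendsto _).comp
    (aRight_tendsto ((starRingEnd ℂ) w) c hc.le (Or.inl hc))
  refine tendsto_nhds_unique h1 ?_
  have := hl.add hr
  have e : (starRingEnd ℂ) (aAl * aR (aOm * (starRingEnd ℂ) w)
        - I * ∫ y in (0:ℝ)..c, aE ((starRingEnd ℂ) w) (y * I))
      + (aAl * aR (aOm * w) - I * ∫ y in (0:ℝ)..c, aE w (y * I)) = 2 * Real.pi * aA w := by
    rw [map_sub, map_mul, map_mul, aR_conj, map_mul, aAl_conj, aOm_conj, conj_I, conj_conj,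
      ← aInt_conj]
    simp only [aE_conj]
    have : ∀ y : ℝ, -(starRingEnd ℂ) ((y:ℂ) * I) = y * I := by
      intro y; rw [map_mul, conj_I, conj_ofReal]; ring
    simp only [this]
    unfold aA
    have hp := aPi_ne
    field_simp
    ring
  rw [e] at this
  refine this.congr fun b => ?_
  simp only [Function.comp, id]
  have hii : ∀ a b : ℝ, IntervalIntegrable (fun s : ℝ => aE w (s + c * I)) volume a b :=
    fun a b => (aE_int w c hc).intervalIntegrable
  rw [← intervalIntegral.integral_add_adjacent_intervals (hii (-b) 0) (hii 0 b)]
  congr 1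
  rw [← aInt_conj]
  have h5 := intervalIntegral.integral_comp_neg (a := 0) (b := b)
    (fun s : ℝ => aE w (s + c * I))
  rw [neg_zero] at h5
  rw [← h5]
  congr 1
  ext s
  rw [aE_conj]
  congr 1
  rw [map_add, map_mul, conj_I, conj_ofReal, conj_ofReal]
  push_cast; ring

lemma aB_norm_den (c s : ℝ) (hc : 0 < c) : c ≤ ‖(s:ℂ) + c * I‖ := by
  have := abs_im_le_norm ((s:ℂ) + c * I)
  simpa [abs_of_pos hc] using this

lemma aB_den_ne (c s : ℝ) (hc : 0 < c) : (s:ℂ) + c * I ≠ 0 := by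
  rw [← norm_pos_iff]
  exact hc.trans_le (aB_norm_den c s hc)

lemma aB_int_le (w : ℂ) (c : ℝ) (hc : 0 < c) (s : ℝ) :
    ‖I * aE w (s + c * I) / (s + c * I)‖ ≤ c⁻¹ * ‖aE w (s + c * I)‖ := by
  rw [norm_div, norm_mul, norm_I, one_mul, div_eq_inv_mul]
  gcongr
  exact aB_norm_den c s hc

lemma aB_int (w : ℂ) (c : ℝ) (hc : 0 < c) :
    Integrable (fun s : ℝ => I * aE w (s + c * I) / (s + c * I)) := by
  refine Integrable.mono' ((aE_int w c hc).norm.const_mul c⁻¹) ?_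
    (ae_of_all _ fun s => aB_int_le w c hc s)
  apply Continuous.aestronglyMeasurable
  refine Continuous.div ?_ ?_ fun s => aB_den_ne c s hc
  · fun_prop
  · fun_prop

lemma aB_deriv (c : ℝ) (hc : 0 < c) (w : ℂ) : HasDerivAt (aB c) (- aA w) w := by
  have key := hasDerivAt_integral_of_dominated_loc_of_deriv_le
    (μ := (volume : Measure ℝ))
    (F := fun (w : ℂ) (s : ℝ) => I * aE w (s + c * I) / (s + c * I))
    (F' := fun (w : ℂ) (s : ℝ) => -aE w (s + c * I))
    (x₀ := w) (s := Metric.ball w 1)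
    (bound := fun s : ℝ => Real.exp (c ^ 3 / 3 + (‖w‖ + 1) * c + (‖w‖ + 1) ^ 2 / (2 * c))
      * Real.exp (-(c / 2) * s ^ 2))
    (Metric.ball_mem_nhds w one_pos)
    (Eventually.of_forall fun v => (aB_int v c hc).aestronglyMeasurable) (aB_int w c hc)
    (aE_int w c hc).neg.aestronglyMeasurable
    ?_ ((integrable_exp_neg_mul_sq (b := c / 2) (by positivity)).const_mul _) ?_
  · have h := key.2.const_mul (1 / (2 * (Real.pi : ℂ)))
    rw [integral_neg, aHor w c hc] at h
    have hp := aPi_ne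
    have e : 1 / (2 * (Real.pi : ℂ)) * -(2 * Real.pi * aA w) = - aA w := by field_simp
    rw [e] at h
    exact h
  · refine ae_of_all _ fun s v hv => ?_
    rw [norm_neg]
    apply aE_bound _ _ _ hc
    have h1 : ‖v - w‖ < 1 := by simpa [dist_eq_norm] using hv
    have := norm_le_norm_add_norm_sub' v w
    linarith
  · refine ae_of_all _ fun s v hv => ?_
    have hz := aB_den_ne c s hc
    unfold aE
    generalize (s:ℂ) + c * I = z at hz ⊢
    have h0 := (((hasDerivAt_id v).mul_const z).const_add (z ^ 3 / 3)).const_mul I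
    have h1 := ((h0.cexp).const_mul I).div_const z
    rw [one_mul] at h1
    have e : I * (Complex.exp (I * (z ^ 3 / 3 + id v * z)) * (I * z)) / z
      = -Complex.exp (I * (z ^ 3 / 3 + v * z)) := by
      have : I * (Complex.exp (I * (z ^ 3 / 3 + id v * z)) * (I * z))
        = (-Complex.exp (I * (z ^ 3 / 3 + v * z))) * z := by
        simp only [id]
        linear_combination Complex.exp (I * (z ^ 3 / 3 + v * z)) * z * I_sq
      rw [this, mul_div_assoc, div_self hz, mul_one]
    rw [e] at h1
    exact h1

lemma aB_real_le (c : ℝ) (hc : 0 < c) : ∃ K : ℝ, ∀ x : ℝ, ‖aB c x‖ ≤ K * Real.exp (-c * x) := by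
  refine ⟨1 / (2 * Real.pi) * ∫ s : ℝ, c⁻¹ * (Real.exp (c ^ 3 / 3) * Real.exp (-c * s ^ 2)),
    fun x => ?_⟩
  unfold aB
  rw [norm_mul, mul_assoc]
  have hp := Real.pi_pos
  have e : ‖(1 / (2 * (Real.pi:ℂ)))‖ = 1 / (2 * Real.pi) := by
    simp [abs_of_pos hp]
  rw [e]
  gcongr
  rw [← integral_mul_const]
  apply norm_integral_le_of_norm_le
  · exact (((integrable_exp_neg_mul_sq hc).const_mul _).const_mul _).mul_const _
  · refine ae_of_all _ fun s => (aB_int_le x c hc s).trans (le_of_eq ?_)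
    rw [aE_norm, mul_assoc, ← Real.exp_add, ← Real.exp_add]
    congr 2
    simp
    ring

lemma aA_real_le : ∃ K : ℝ, ∀ x : ℝ, |Ai x| ≤ K * Real.exp (-1 * x) := by
  refine ⟨1 / (2 * Real.pi) * ∫ s : ℝ, (Real.exp (1 / 3) * Real.exp (-1 * s ^ 2)),
    fun x => ?_⟩
  have h := aHor x 1 one_pos
  rw [aAi_aA] at h
  have h2 : ‖∫ s : ℝ, aE x (s + (1:ℝ) * I)‖
      ≤ (∫ s : ℝ, (Real.exp (1 / 3) * Real.exp (-1 * s ^ 2))) * Real.exp (-1 * x) := by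
    rw [← integral_mul_const]
    apply norm_integral_le_of_norm_le
    · exact ((integrable_exp_neg_mul_sq one_pos).const_mul _).mul_const _
    · refine ae_of_all _ fun s => le_of_eq ?_
      rw [aE_norm, ← Real.exp_add, ← Real.exp_add]
      congr 1
      simp
      ring
  have hp := Real.pi_pos
  rw [h, norm_mul, norm_mul, Complex.norm_real, Complex.norm_real] at h2
  simp only [Complex.norm_ofNat, Real.norm_eq_abs, abs_of_pos hp] at h2
  rw [mul_assoc, one_div, inv_mul_eq_div, le_div_iff₀ (by positivity)]
  linarith

end AiryPrim

section AiryAsymp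

open Complex

lemma aArctan_int (b : ℝ) : IntegrableOn
    (fun v : ℝ => Real.exp (-(1/2) * v) * Real.sin (b * v) / v) (Ioi 0) := by
  refine Integrable.mono' ((exp_neg_integrableOn_Ioi 0 (b := 1/2) (by norm_num)).const_mul |b|)
    ?_ ?_
  · refine AEStronglyMeasurable.div₀ ?_ ?_ <;> fun_prop
  · refine (ae_restrict_iff' measurableSet_Ioi).mpr (ae_of_all _ fun v hv => ?_)
    have hv : (0:ℝ) < v := hv
    rw [norm_div, norm_mul, Real.norm_eq_abs, Real.norm_eq_abs, Real.norm_eq_abs, Real.abs_exp,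
      div_le_iff₀ (abs_pos.mpr hv.ne')]
    have := Real.abs_sin_le_abs (x := b * v)
    rw [abs_mul] at this
    calc _ ≤ Real.exp (-(1/2) * v) * (|b| * |v|) := by gcongr
      _ = _ := by ring

lemma aArctan_deriv (b : ℝ) : HasDerivAt
    (fun b : ℝ => ∫ v in Ioi (0:ℝ), Real.exp (-(1/2) * v) * Real.sin (b * v) / v)
    (2 / (1 + (2 * b) ^ 2)) b := by
  have key := hasDerivAt_integral_of_dominated_loc_of_deriv_le
    (μ := volume.restrict (Ioi (0:ℝ)))
    (F := fun (b : ℝ) (v : ℝ) => Real.exp (-(1/2) * v) * Real.sin (b * v) / v)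
    (F' := fun (b : ℝ) (v : ℝ) => Real.exp (-(1/2) * v) * Real.cos (b * v))
    (x₀ := b) (s := Set.univ)
    (bound := fun v : ℝ => Real.exp (-(1/2) * v))
    univ_mem
    (Eventually.of_forall fun v => (aArctan_int v).aestronglyMeasurable) (aArctan_int b)
    (by fun_prop)
    ?_ (exp_neg_integrableOn_Ioi 0 (by norm_num)) ?_
  · have h := key.2
    have e : ∫ v in Ioi (0:ℝ), Real.exp (-(1/2) * v) * Real.cos (b * v)
        = 2 / (1 + (2 * b) ^ 2) := by
      have hre : (-(1/2) + b * I : ℂ).re < 0 := by simp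
      have h1 := integral_exp_mul_complex_Ioi hre 0
      have h2 := integrableOn_exp_mul_complex_Ioi hre 0
      have h3 : ∫ v in Ioi (0:ℝ), Real.exp (-(1/2) * v) * Real.cos (b * v)
          = ∫ v in Ioi (0:ℝ), RCLike.re (Complex.exp ((-(1/2) + b * I) * v)) := by
        congr 1
        ext v
        have : (-(1/2) + b * I : ℂ) * v = ((-(1/2) * v : ℝ) : ℂ) + ((b * v : ℝ) : ℂ) * I := by
          push_cast; ring
        rw [this, Complex.exp_add, ← Complex.ofReal_exp]
        change _ = (((Real.exp (-(1/2) * v) : ℝ) : ℂ) * Complex.exp (((b * v : ℝ) : ℂ) * I)).re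
        rw [Complex.re_ofReal_mul, exp_ofReal_mul_I_re]
      rw [h3, integral_re h2, h1]
      simp only [ofReal_zero, mul_zero, Complex.exp_zero]
      have : (-1 / (-(1/2) + b * I) : ℂ) = ((2 / (1 + (2 * b) ^ 2) : ℝ) : ℂ)
          + ((4 * b / (1 + (2 * b) ^ 2) : ℝ) : ℂ) * I := by
        have hd : (1 + (2 * b) ^ 2 : ℂ) ≠ 0 := by
          have : (1 + (2 * b) ^ 2 : ℝ) ≠ 0 := by positivity
          exact_mod_cast this
        have hn : (-(1/2) + b * I : ℂ) ≠ 0 := by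
          intro h0; rw [h0] at hre; simp at hre
        have hs : ((2 / (1 + (2 * b) ^ 2) : ℝ) : ℂ) + ((4 * b / (1 + (2 * b) ^ 2) : ℝ) : ℂ) * I
            = (2 + 4 * b * I) / (1 + (2 * b) ^ 2) := by
          push_cast; ring
        rw [hs, div_eq_div_iff hn hd]
        linear_combination (-4 * (b:ℂ) ^ 2) * I_sq
      rw [this, RCLike.re_eq_complex_re]
      simp only [add_re, mul_re, ofReal_re, ofReal_im, I_re, I_im]
      ring
    rw [e] at h
    exact h
  · refine ae_of_all _ fun v b _ => ?_
    rw [norm_mul, Real.norm_eq_abs, Real.norm_eq_abs, Real.abs_exp]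
    have := Real.abs_cos_le_one (b * v)
    nlinarith [Real.exp_pos (-(1/2) * v)]
  · refine (ae_restrict_iff' measurableSet_Ioi).mpr (ae_of_all _ fun v hv b _ => ?_)
    have hv : v ≠ 0 := ne_of_gt hv
    have h0 := (hasDerivAt_id b).mul_const v
    have h1 := ((h0.sin).const_mul (Real.exp (-(1/2) * v))).div_const v
    have e : Real.exp (-(1/2) * v) * (Real.cos (id b * v) * (1 * v)) / v
      = Real.exp (-(1/2) * v) * Real.cos (b * v) := by
      simp only [id]; field_simp
    rw [e] at h1
    exact h1

lemma aArctan (b : ℝ) :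
    ∫ v in Ioi (0:ℝ), Real.exp (-(1/2) * v) * Real.sin (b * v) / v = Real.arctan (2 * b) := by
  have h : ∀ b, HasDerivAt (fun b : ℝ =>
      (∫ v in Ioi (0:ℝ), Real.exp (-(1/2) * v) * Real.sin (b * v) / v) - Real.arctan (2 * b))
      0 b := by
    intro b
    have h0 := ((hasDerivAt_id b).const_mul 2).arctan
    have h1 := (aArctan_deriv b).sub h0
    have e : 2 / (1 + (2 * b) ^ 2) - 1 / (1 + (2 * id b) ^ 2) * (2 * 1) = 0 := by
      simp only [id]; ring
    rw [e] at h1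
    exact h1
  have hc := is_const_of_deriv_eq_zero (fun b => (h b).differentiableAt) (fun b => (h b).deriv) b 0
  simp at hc
  norm_num
  linarith

lemma aD_real (x : ℝ) (hx : 0 < x) : aD x = (((1 / Real.pi) * ∫ v in Ioi (0:ℝ),
    Real.exp (-(v * x⁻¹) ^ 3 / 3) * (Real.exp (-(1/2) * v) * Real.sin (√3 / 2 * v) / v) : ℝ) : ℂ) := by
  set g : ℝ → ℝ := fun v =>
    Real.exp (-(v * x⁻¹) ^ 3 / 3) * (Real.exp (-(1/2) * v) * Real.sin (√3 / 2 * v) / v) with hg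
  have h1 := integral_comp_mul_left_Ioi (fun v : ℝ => g v) 0 hx
  rw [mul_zero] at h1
  have h2 : ∫ v in Ioi (0:ℝ), g v = ∫ r in Ioi (0:ℝ), x * g (x * r) := by
    rw [integral_const_mul, h1, smul_eq_mul, ← mul_assoc, mul_inv_cancel₀ hx.ne', one_mul]
  rw [h2]
  unfold aD aP
  rw [← integral_sub (aP_int _) (aP_int _)]
  have h3 : ∫ r in Ioi (0:ℝ), ((Complex.exp (-(r:ℂ) ^ 3 / 3 + aOm * x * r)
        - Complex.exp (-(r:ℂ) ^ 3 / 3)) / r - (Complex.exp (-(r:ℂ) ^ 3 / 3 + aOm' * x * r)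
        - Complex.exp (-(r:ℂ) ^ 3 / 3)) / r)
      = ∫ r in Ioi (0:ℝ), 2 * I * ((x * g (x * r) : ℝ) : ℂ) := by
    apply setIntegral_congr_fun measurableSet_Ioi
    intro r hr
    have hr : (0:ℝ) < r := hr
    have hrc : (r:ℂ) ≠ 0 := by exact_mod_cast hr.ne'
    have hxc : (x:ℂ) ≠ 0 := by exact_mod_cast hx.ne'
    simp only [hg]
    have e1 : x * r * x⁻¹ = r := by field_simp
    rw [e1]
    have e2 : (-(r:ℂ) ^ 3 / 3 + aOm * x * r) = -(r:ℂ) ^ 3 / 3 + -(1/2) * (x * r)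
        + ((√3 / 2 : ℝ) : ℂ) * (x * r) * I := by
      unfold aOm; push_cast; ring
    have e3 : (-(r:ℂ) ^ 3 / 3 + aOm' * x * r) = -(r:ℂ) ^ 3 / 3 + -(1/2) * (x * r)
        + -(((√3 / 2 : ℝ) : ℂ) * (x * r)) * I := by
      unfold aOm'; push_cast; ring
    rw [e2, e3]
    simp only [Complex.exp_add]
    simp only [ofReal_mul, ofReal_div, ofReal_exp, ofReal_sin, Complex.sin, ofReal_neg,
      ofReal_pow, ofReal_one, ofReal_ofNat]
    field_simp
    ring_nf
    rw [I_sq]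
    ring
  rw [h3, integral_const_mul, integral_complex_ofReal]
  have hp := aPi_ne
  have hI := I_ne_zero
  push_cast
  field_simp

lemma aD_tendsto : Tendsto (fun x : ℝ => aD x) atTop (nhds (1 / 3)) := by
  have h : Tendsto (fun x : ℝ => (1 / Real.pi) * ∫ v in Ioi (0:ℝ),
    Real.exp (-(v * x⁻¹) ^ 3 / 3) * (Real.exp (-(1/2) * v) * Real.sin (√3 / 2 * v) / v))
      atTop (nhds ((1 / Real.pi) * ∫ v in Ioi (0:ℝ),
        Real.exp (-(1/2) * v) * Real.sin (√3 / 2 * v) / v)) := by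
    apply Tendsto.const_mul
    apply tendsto_integral_filter_of_dominated_convergence
      (fun v : ℝ => ‖Real.exp (-(1/2) * v) * Real.sin (√3 / 2 * v) / v‖)
    · refine Eventually.of_forall fun x => ?_
      exact AEStronglyMeasurable.mul (by fun_prop) (aArctan_int _).aestronglyMeasurable
    · filter_upwards [eventually_gt_atTop 0] with x hx
      refine (ae_restrict_iff' measurableSet_Ioi).mpr (ae_of_all _ fun v hv => ?_)
      have hv : (0:ℝ) < v := hv
      rw [norm_mul]
      apply mul_le_of_le_one_left (norm_nonneg _)
      rw [Real.norm_eq_abs, Real.abs_exp]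
      apply Real.exp_le_one_iff.mpr
      have : 0 < (v * x⁻¹) ^ 3 := by positivity
      linarith
    · exact (aArctan_int _).norm
    · refine ae_of_all _ fun v => ?_
      have h1 : Tendsto (fun x : ℝ => Real.exp (-(v * x⁻¹) ^ 3 / 3)) atTop (nhds 1) := by
        have h2 : Continuous (fun u : ℝ => Real.exp (-(v * u) ^ 3 / 3)) := by fun_prop
        have := (h2.tendsto 0).comp tendsto_inv_atTop_zero
        simp only [mul_zero, ne_eq, OfNat.ofNat_ne_zero, not_false_eq_true, zero_pow, neg_zero,
          zero_div, Real.exp_zero] at this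
        exact this
      simpa using h1.mul_const (Real.exp (-(1/2) * v) * Real.sin (√3 / 2 * v) / v)
  rw [aArctan] at h
  have e : 1 / Real.pi * Real.arctan (2 * (√3 / 2)) = 1 / 3 := by
    have : 2 * (√3 / 2) = √3 := by ring
    rw [this, Real.arctan_sqrt_three]
    have := Real.pi_ne_zero
    field_simp
  rw [e] at h
  have h2 := (Complex.continuous_ofReal.tendsto _).comp h
  have e2 : ((1 / 3 : ℝ) : ℂ) = 1 / 3 := by push_cast; ring
  rw [e2] at h2
  refine h2.congr' ?_
  filter_upwards [eventually_gt_atTop 0] with x hx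
  rw [aD_real x hx]
  rfl

lemma aB_eq (c : ℝ) (hc : 0 < c) (w : ℂ) : aB c w = 1 / 3 - aD w := by
  have h : ∀ w, HasDerivAt (fun w => aB c w + aD w) 0 w := by
    intro w
    have := (aB_deriv c hc w).add (aD_deriv w)
    rw [neg_add_cancel] at this
    exact this
  have hconst : ∀ x y, aB c x + aD x = aB c y + aD y :=
    is_const_of_deriv_eq_zero (fun b => (h b).differentiableAt) (fun b => (h b).deriv)
  have hB : Tendsto (fun x : ℝ => aB c x) atTop (nhds 0) := by
    obtain ⟨K, hK⟩ := aB_real_le c hc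
    refine squeeze_zero_norm hK ?_
    have : Tendsto (fun x : ℝ => Real.exp (-c * x)) atTop (nhds 0) := by
      apply Real.tendsto_exp_atBot.comp
      exact tendsto_id.const_mul_atTop_of_neg (by linarith)
    simpa using this.const_mul K
  have h1 := hB.add aD_tendsto
  rw [zero_add] at h1
  have h2 : Tendsto (fun x : ℝ => aB c x + aD x) atTop (nhds (aB c w + aD w)) := by
    have : (fun x : ℝ => aB c x + aD x) = fun _ => aB c w + aD w := by
      ext x; exact hconst _ _
    rw [this]; exact tendsto_const_nhds
  have := tendsto_nhds_unique h2 h1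
  linear_combination this

lemma aA_cont : Continuous aA := by
  have h1 : Differentiable ℂ aD := fun w => (aD_deriv w).differentiableAt
  have h2 : Continuous (deriv aD) := (h1.contDiff (n := 1)).continuous_deriv le_rfl
  have : deriv aD = aA := funext fun w => (aD_deriv w).deriv
  rwa [this] at h2

lemma aAi_cont : Continuous Ai := by
  have h : Continuous (fun x : ℝ => (aA x).re) := by
    exact Complex.continuous_re.comp (aA_cont.comp Complex.continuous_ofReal)
  have e : (fun x : ℝ => (aA x).re) = Ai := by
    ext x; rw [aAi_aA, ofReal_re]
  rwa [e] at h

lemma aD_re_deriv (x : ℝ) : HasDerivAt (fun x : ℝ => (aD x).re) (Ai x) x := by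
  have h := (aD_deriv x).real_of_complex
  rwa [aAi_aA, ofReal_re] at h

lemma aAi_integral (a b : ℝ) : ∫ u in a..b, Ai u = (aD b).re - (aD a).re :=
  intervalIntegral.integral_eq_sub_of_hasDerivAt (fun x _ => aD_re_deriv x)
    (aAi_cont.intervalIntegrable _ _)

lemma aD_zero : aD 0 = 0 := by simp [aD]

noncomputable def aJ (t : ℝ) : ℂ :=
  ∫ v : ℝ, Complex.exp (-(v:ℂ) ^ 2 + t * (v:ℂ) ^ 3 / 3 * I) * (I / (I + t * v))

lemma aJ_norm_den (t v : ℝ) : 1 ≤ ‖I + (t:ℂ) * v‖ := by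
  have := abs_im_le_norm (I + (t:ℂ) * v)
  simpa using this

lemma aJ_den_ne (t v : ℝ) : I + (t:ℂ) * v ≠ 0 := by
  rw [← norm_pos_iff]
  exact one_pos.trans_le (aJ_norm_den t v)

lemma aJ_tendsto : Tendsto aJ (nhds 0) (nhds ((√Real.pi : ℝ) : ℂ)) := by
  have e : ((√Real.pi : ℝ) : ℂ) =
      ∫ v : ℝ, Complex.exp (-(v:ℂ) ^ 2 + (0:ℝ) * (v:ℂ) ^ 3 / 3 * I) * (I / (I + (0:ℝ) * v)) := by
    have := integral_gaussian 1
    rw [div_one] at this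
    rw [← this, ← integral_complex_ofReal]
    congr 1
    ext v
    simp
  rw [e]
  unfold aJ
  apply tendsto_integral_filter_of_dominated_convergence (fun v : ℝ => Real.exp (-1 * v ^ 2))
  · refine Eventually.of_forall fun t => ?_
    apply Continuous.aestronglyMeasurable
    refine Continuous.mul (by fun_prop) (Continuous.div (by fun_prop) (by fun_prop) ?_)
    exact fun v => aJ_den_ne t v
  · refine Eventually.of_forall fun t => ae_of_all _ fun v => ?_
    rw [norm_mul, norm_div, norm_I, Complex.norm_exp]
    have e1 : (-(v:ℂ) ^ 2 + t * (v:ℂ) ^ 3 / 3 * I)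
      = ((-1 * v ^ 2 : ℝ) : ℂ) + ((t * v ^ 3 / 3 : ℝ) : ℂ) * I := by push_cast; ring
    have e2 : (((-1 * v ^ 2 : ℝ) : ℂ) + ((t * v ^ 3 / 3 : ℝ) : ℂ) * I).re = -1 * v ^ 2 := by
      simp only [add_re, mul_re, ofReal_re, ofReal_im, I_re, I_im]; ring
    rw [e1, e2]
    apply mul_le_of_le_one_right (Real.exp_pos _).le
    rw [div_le_one (one_pos.trans_le (aJ_norm_den t v))]
    exact aJ_norm_den t v
  · exact integrable_exp_neg_mul_sq one_pos
  · refine ae_of_all _ fun v => ?_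
    have : Continuous (fun t : ℝ =>
      Complex.exp (-(v:ℂ) ^ 2 + t * (v:ℂ) ^ 3 / 3 * I) * (I / (I + t * v))) := by
      refine Continuous.mul (by fun_prop) (Continuous.div (by fun_prop) (by fun_prop) ?_)
      exact fun t => aJ_den_ne t v
    exact this.tendsto 0

lemma aB_aJ (q : ℝ) (hq : 0 < q) : aB (q ^ 2) ((q ^ 4 : ℝ) : ℂ) =
    1 / (2 * Real.pi) * Complex.exp (-(2/3) * q ^ 6) * ((q:ℂ) ^ 3)⁻¹ * aJ ((q ^ 3)⁻¹) := by
  have hqc : (q:ℂ) ≠ 0 := by exact_mod_cast hq.ne'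
  unfold aB
  have h1 := Measure.integral_comp_mul_left (fun s : ℝ =>
    I * aE ((q ^ 4 : ℝ) : ℂ) (s + ((q ^ 2 : ℝ) : ℂ) * I) / (s + ((q ^ 2 : ℝ) : ℂ) * I)) q⁻¹
  rw [inv_inv, abs_of_pos hq, Complex.real_smul] at h1
  have h2 : ∀ v : ℝ, I * aE ((q ^ 4 : ℝ) : ℂ) (((q⁻¹ * v : ℝ) : ℂ) + ((q ^ 2 : ℝ) : ℂ) * I)
        / (((q⁻¹ * v : ℝ) : ℂ) + ((q ^ 2 : ℝ) : ℂ) * I)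
      = Complex.exp (-(2/3) * q ^ 6) * ((q:ℂ) ^ 2)⁻¹ *
        (Complex.exp (-(v:ℂ) ^ 2 + ((q ^ 3)⁻¹ : ℝ) * (v:ℂ) ^ 3 / 3 * I)
          * (I / (I + ((q ^ 3)⁻¹ : ℝ) * v))) := by
    intro v
    have hd := aJ_den_ne ((q ^ 3)⁻¹) v
    have e1 : (((q⁻¹ * v : ℝ) : ℂ) + ((q ^ 2 : ℝ) : ℂ) * I)
        = (q:ℂ) ^ 2 * (I + ((q ^ 3)⁻¹ : ℝ) * v) := by
      push_cast
      field_simp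
      ring
    have e2 : aE ((q ^ 4 : ℝ) : ℂ) (((q⁻¹ * v : ℝ) : ℂ) + ((q ^ 2 : ℝ) : ℂ) * I)
        = Complex.exp (-(2/3) * q ^ 6) *
          Complex.exp (-(v:ℂ) ^ 2 + ((q ^ 3)⁻¹ : ℝ) * (v:ℂ) ^ 3 / 3 * I) := by
      rw [← Complex.exp_add]
      unfold aE
      congr 1
      have e3 : (v:ℂ) = q * ((q⁻¹ * v : ℝ) : ℂ) := by push_cast; field_simp
      have e4 : (((q ^ 3)⁻¹ : ℝ) : ℂ) * (v:ℂ) ^ 3 = ((q⁻¹ * v : ℝ) : ℂ) ^ 3 := by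
        push_cast; field_simp
      rw [e4]
      generalize hs : ((q⁻¹ * v : ℝ) : ℂ) = s at e3 ⊢
      rw [e3]
      push_cast
      have hI3 : I ^ 3 = -I := I_pow_three
      have hI4 : I ^ 4 = 1 := I_pow_four
      linear_combination (s ^ 2 * (q:ℂ) ^ 2 + (q:ℂ)^6) * I_sq + s * (q:ℂ) ^ 4 * hI3
        + (q:ℂ) ^ 6 / 3 * hI4
    rw [e2, e1]
    field_simp
  simp only [h2] at h1
  rw [integral_const_mul] at h1
  have h3 : ∫ s : ℝ, I * aE ((q ^ 4 : ℝ) : ℂ) (s + ((q ^ 2 : ℝ) : ℂ) * I)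
      / (s + ((q ^ 2 : ℝ) : ℂ) * I)
    = (q:ℂ)⁻¹ * (Complex.exp (-(2/3) * q ^ 6) * ((q:ℂ) ^ 2)⁻¹ * aJ ((q ^ 3)⁻¹)) := by
    unfold aJ
    rw [h1, ← mul_assoc, inv_mul_cancel₀ hqc, one_mul]
  rw [h3]
  field_simp

/-- the constant of the oscillatory bound -/
noncomputable def aC : ℝ := 1 / (2 * Real.pi) * ((√3 / 2)⁻¹ * √(Real.pi / (√3 / 2)))

lemma aC_pos : 0 < aC := by
  have := Real.pi_pos
  unfold aC; positivity

lemma aB_osc (p σ : ℝ) (hp : 0 < p) (hσ : σ ^ 2 = 1) :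
    ‖aB (√3 / 2 * p ^ 2) (((p ^ 4 / 2 : ℝ) : ℂ) + ((σ * (√3 / 2) * p ^ 4 : ℝ) : ℂ) * I)‖
      ≤ aC * (p ^ 3)⁻¹ := by
  set c := √3 / 2 * p ^ 2 with hc
  set w := (((p ^ 4 / 2 : ℝ) : ℂ) + ((σ * (√3 / 2) * p ^ 4 : ℝ) : ℂ) * I) with hw
  have hc0 : 0 < c := by positivity
  have hpi := Real.pi_pos
  have hre : w.re = p ^ 4 / 2 := by
    rw [hw]; simp only [add_re, mul_re, ofReal_re, ofReal_im, I_re, I_im]; ring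
  have him : w.im = σ * (√3 / 2) * p ^ 4 := by
    rw [hw]; simp only [add_im, mul_im, ofReal_re, ofReal_im, I_re, I_im]; ring
  unfold aB
  rw [norm_mul]
  have e : ‖(1 / (2 * (Real.pi:ℂ)))‖ = 1 / (2 * Real.pi) := by
    simp [abs_of_pos hpi]
  rw [e]
  have hint : ‖∫ s : ℝ, I * aE w (s + c * I) / (s + c * I)‖
      ≤ ∫ s : ℝ, c⁻¹ * Real.exp (-c * (s + σ * p ^ 2 / 2) ^ 2) := by
    apply norm_integral_le_of_norm_le
    · exact ((integrable_exp_neg_mul_sq hc0).comp_add_right _).const_mul _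
    · refine ae_of_all _ fun s => (aB_int_le w c hc0 s).trans (le_of_eq ?_)
      rw [aE_norm, hre, him]
      congr 2
      have h3 : √3 ^ 2 = 3 := Real.sq_sqrt (by norm_num)
      have e1 : c ^ 3 / 3 = c * (p ^ 4 / 4) := by
        rw [hc]; linear_combination (√3 * p ^ 6 / 24) * h3
      have e2 : σ * (√3 / 2) * p ^ 4 * s = c * (σ * p ^ 2 * s) := by rw [hc]; ring
      rw [e1, e2]
      linear_combination (c * p ^ 4 / 4) * hσ
  rw [integral_const_mul, integral_add_right_eq_self (fun s : ℝ => Real.exp (-c * s ^ 2)),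
    integral_gaussian] at hint
  have e5 : √(Real.pi / c) = √(Real.pi / (√3 / 2)) * p⁻¹ := by
    rw [hc, ← div_div, Real.sqrt_div' _ (by positivity), Real.sqrt_sq hp.le]
    rfl
  rw [e5] at hint
  calc _ ≤ 1 / (2 * Real.pi) * (c⁻¹ * (√(Real.pi / (√3 / 2)) * p⁻¹)) := by gcongr
    _ = aC * (p ^ 3)⁻¹ := by
      unfold aC
      rw [hc]
      have : √3 ≠ 0 := by positivity
      field_simp

lemma aD_neg (p : ℝ) (hp : 0 < p) : |(aD ((-p ^ 4 : ℝ) : ℂ)).re + 2 / 3| ≤ 2 * aC * (p ^ 3)⁻¹ := by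
  have h1 := aB_osc p 1 hp (by norm_num)
  have h2 := aB_osc p (-1) hp (by norm_num)
  have hc0 : 0 < √3 / 2 * p ^ 2 := by positivity
  rw [aB_eq _ hc0] at h1 h2
  set z1 := (((p ^ 4 / 2 : ℝ) : ℂ) + ((1 * (√3 / 2) * p ^ 4 : ℝ) : ℂ) * I) with hz1
  set z2 := (((p ^ 4 / 2 : ℝ) : ℂ) + ((-1 * (√3 / 2) * p ^ 4 : ℝ) : ℂ) * I) with hz2
  have h3 := aSq3
  have e : aD ((-p ^ 4 : ℝ) : ℂ) = - aD z1 - aD z2 := by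
    unfold aD
    have a1 : aOm * ((-p ^ 4 : ℝ) : ℂ) = z2 := by
      rw [hz2]; unfold aOm; push_cast; ring
    have a2 : aOm' * ((-p ^ 4 : ℝ) : ℂ) = z1 := by
      rw [hz1]; unfold aOm'; push_cast; ring
    have a3 : aOm * z1 = -(p:ℂ) ^ 4 := by
      rw [hz1]; unfold aOm; push_cast
      linear_combination (-(p:ℂ) ^ 4 / 4) * h3 + ((√3:ℂ) ^ 2 * (p:ℂ) ^ 4 / 4) * I_sq
    have a4 : aOm' * z1 = z2 := by
      rw [hz1, hz2]; unfold aOm'; push_cast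
      linear_combination ((p:ℂ) ^ 4 / 4) * h3 - ((√3:ℂ) ^ 2 * (p:ℂ) ^ 4 / 4) * I_sq
    have a5 : aOm * z2 = z1 := by
      rw [hz1, hz2]; unfold aOm; push_cast
      linear_combination ((p:ℂ) ^ 4 / 4) * h3 - ((√3:ℂ) ^ 2 * (p:ℂ) ^ 4 / 4) * I_sq
    have a6 : aOm' * z2 = -(p:ℂ) ^ 4 := by
      rw [hz2]; unfold aOm'; push_cast
      linear_combination (-(p:ℂ) ^ 4 / 4) * h3 + ((√3:ℂ) ^ 2 * (p:ℂ) ^ 4 / 4) * I_sq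
    rw [a1, a2, a3, a4, a5, a6]
    ring
  have e2 : (aD ((-p ^ 4 : ℝ) : ℂ)).re + 2 / 3 = ((1 / 3 - aD z1) + (1 / 3 - aD z2)).re := by
    rw [e]
    simp only [add_re, sub_re, neg_re]
    norm_num
    ring
  rw [e2]
  calc _ ≤ ‖(1 / 3 - aD z1) + (1 / 3 - aD z2)‖ := abs_re_le_norm _
    _ ≤ ‖1 / 3 - aD z1‖ + ‖1 / 3 - aD z2‖ := norm_add_le _ _
    _ ≤ _ := by linarith

lemma aAi_integrableOn (a : ℝ) : IntegrableOn Ai (Ioi a) := by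
  obtain ⟨K, hK⟩ := aA_real_le
  apply integrable_of_isBigO_exp_neg (b := 1) one_pos aAi_cont.continuousOn
  apply Asymptotics.IsBigO.of_bound K
  refine Eventually.of_forall fun x => ?_
  rw [Real.norm_eq_abs, Real.norm_eq_abs, Real.abs_exp]
  exact hK x

lemma aMain1 : Tendsto
      (fun x : ℝ => 2 * Real.sqrt Real.pi * x ^ ((3:ℝ)/4) * Real.exp ((2/3) * x ^ ((3:ℝ)/2)) *
        (1/3 - ∫ u in (0:ℝ)..x, Ai u))
      atTop (nhds 1) := by
  have hpi := Real.pi_pos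
  have hq : Tendsto (fun x : ℝ => ((x ^ ((1:ℝ)/4)) ^ 3)⁻¹) atTop (nhds 0) := by
    apply tendsto_inv_atTop_zero.comp
    exact (tendsto_pow_atTop (by norm_num)).comp (tendsto_rpow_atTop (by norm_num))
  have h1 := (Complex.continuous_re.tendsto _).comp (aJ_tendsto.comp hq)
  have h2 := h1.const_mul (1 / √Real.pi)
  rw [ofReal_re, one_div_mul_cancel (by positivity)] at h2
  refine h2.congr' ?_
  filter_upwards [eventually_gt_atTop 0] with x hx
  set q := x ^ ((1:ℝ)/4) with hqd
  have hq0 : 0 < q := Real.rpow_pos_of_pos hx _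
  have e1 : x ^ ((3:ℝ)/4) = q ^ 3 := by
    rw [hqd, ← Real.rpow_natCast, ← Real.rpow_mul hx.le]; norm_num
  have e2 : x ^ ((3:ℝ)/2) = q ^ 6 := by
    rw [hqd, ← Real.rpow_natCast, ← Real.rpow_mul hx.le]; norm_num
  have e3 : x = q ^ 4 := by
    rw [hqd, ← Real.rpow_natCast, ← Real.rpow_mul hx.le]; norm_num
  rw [e1, e2, aAi_integral]
  have h0 : (aD ((0:ℝ):ℂ)).re = 0 := by rw [ofReal_zero, aD_zero, zero_re]
  rw [h0, sub_zero]
  have h4 := aB_aJ q hq0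
  rw [aB_eq _ (by positivity), ← e3] at h4
  have h5 : 1 / 3 - (aD x).re = (1 / 3 - aD x).re := by
    rw [sub_re]; norm_num
  have h6 : 1 / (2 * (Real.pi:ℂ)) * Complex.exp (-(2/3) * q ^ 6) * ((q:ℂ) ^ 3)⁻¹
      = ((1 / (2 * Real.pi) * Real.exp (-((2/3) * q ^ 6)) * (q ^ 3)⁻¹ : ℝ) : ℂ) := by
    push_cast; ring_nf
  rw [h5, h4, h6, re_ofReal_mul, Real.exp_neg]
  simp only [Function.comp]
  have h7 : Real.exp ((2/3) * q ^ 6) ≠ 0 := (Real.exp_pos _).ne'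
  generalize Real.exp ((2/3) * q ^ 6) = X at h7 ⊢
  have h8 : √Real.pi ^ 2 = Real.pi := Real.sq_sqrt hpi.le
  have h9 : √Real.pi ≠ 0 := by positivity
  generalize (aJ (q ^ 3)⁻¹).re = Y
  rw [← h8]
  rw [Real.sqrt_sq (by positivity)]
  field_simp

lemma aMain2 (x : ℝ) (hx : 1 ≤ x) :
    |(∫ u in (-x)..(0:ℝ), Ai u) - 2/3| ≤ (2 * aC) * x ^ (-(3:ℝ)/4) := by
  have hx0 : 0 < x := by linarith
  set q := x ^ ((1:ℝ)/4) with hqd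
  have hq0 : 0 < q := Real.rpow_pos_of_pos hx0 _
  have e1 : x ^ (-(3:ℝ)/4) = (q ^ 3)⁻¹ := by
    rw [hqd, ← Real.rpow_natCast, ← Real.rpow_mul hx0.le, ← Real.rpow_neg hx0.le]; norm_num
  have e3 : x = q ^ 4 := by
    rw [hqd, ← Real.rpow_natCast, ← Real.rpow_mul hx0.le]; norm_num
  rw [e1, aAi_integral]
  have h0 : (aD ((0:ℝ):ℂ)).re = 0 := by rw [ofReal_zero, aD_zero, zero_re]
  have h := aD_neg q hq0
  rw [← e3] at h
  rw [h0, ← abs_neg]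
  convert h using 2
  ring

lemma aMain3 (x : ℝ) (hx : 1 ≤ x) :
    |1 - ∫ u in Ioi (-x), Ai u| ≤ (2 * aC) * x ^ (-(3:ℝ)/4) := by
  have ht : Tendsto (fun x : ℝ => (aD x).re) atTop (nhds (1 / 3)) := by
    have := (Complex.continuous_re.tendsto _).comp aD_tendsto
    have e : (1 / 3 : ℂ).re = 1 / 3 := by norm_num
    rw [e] at this
    exact this
  have h := integral_Ioi_of_hasDerivAt_of_tendsto' (a := -x) (fun u _ => aD_re_deriv u)
    (aAi_integrableOn _) ht
  have h2 := aMain2 x hx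
  have h0 : (aD ((0:ℝ):ℂ)).re = 0 := by rw [ofReal_zero, aD_zero, zero_re]
  rw [aAi_integral, h0] at h2
  rw [h, ← abs_neg]
  convert h2 using 2
  ring

end AiryAsymp

/-- asymptotics of integrals of the Airy function. -/
theorem airy_integral_asymptotics :
    (Filter.Tendsto
      (fun x : ℝ => 2 * Real.sqrt Real.pi * x ^ ((3:ℝ)/4) * Real.exp ((2/3) * x ^ ((3:ℝ)/2)) *
        (1/3 - ∫ u in (0:ℝ)..x, Ai u))
      Filter.atTop (nhds 1)) ∧
    (∃ C : ℝ, 0 < C ∧ ∀ x : ℝ, 1 ≤ x →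
      |(∫ u in (-x)..(0:ℝ), Ai u) - 2/3| ≤ C * x ^ (-(3:ℝ)/4)) ∧
    ((∀ a : ℝ, IntegrableOn Ai (Set.Ioi a)) ∧
      ∃ C : ℝ, 0 < C ∧ ∀ x : ℝ, 1 ≤ x →
        |1 - ∫ u in Set.Ioi (-x), Ai u| ≤ C * x ^ (-(3:ℝ)/4)) := by
  exact ⟨aMain1, ⟨2 * aC, by have := aC_pos; positivity, aMain2⟩, aAi_integrableOn,
    2 * aC, by have := aC_pos; positivity, aMain3⟩
end
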